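/- Let A* be a block-nondegenerate globally optimal solution, i.e., a block-nondegenerate maximizer of f over the feasible set. Then there exists δ > 0 such that every greedy HOOI sequence {A^k}_{k≥0} with ‖A⁰ − A*‖_F ≤ δ converges (blockwise in Frobenius norm) to a feasible point Ā that is a globally optimal solution, i.e., f(Ā) equals the maximum of f over all feasible points. -/

import Mathlib

open Matrix BigOperators Filter

def froSq {ι κ : Type*} [Fintype ι] [Fintype κ] (M : Matrix ι κ ℝ) : ℝ :=
  ∑ i, ∑ j, (M i j) ^ 2

noncomputable def fro {ι κ : Type*} [Fintype ι] [Fintype κ] (M : Matrix ι κ ℝ) : ℝ :=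
  Real.sqrt (froSq M)

noncomputable def eigList {m : ℕ} {κ : Type*} [Fintype κ] (Y : Matrix (Fin m) κ ℝ) : List ℝ :=
  ((((Finset.univ : Finset (Fin m)).val.map
      (fun j => (Matrix.isHermitian_mul_conjTranspose_self Y).eigenvalues j)).sort (· ≤ ·)).reverse)

noncomputable def sval {m : ℕ} {κ : Type*} [Fintype κ] (Y : Matrix (Fin m) κ ℝ) (i : ℕ) : ℝ :=
  Real.sqrt ((eigList Y).getD (i - 1) 0)

/-- Feasibility: every factor matrix has orthonormal columns. -/
def TFeas {N : ℕ} {I r : Fin N → ℕ}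
    (A : (n : Fin N) → Matrix (Fin (I n)) (Fin (r n)) ℝ) : Prop :=
  ∀ n, (A n)ᵀ * A n = 1

/-- `Gₙ(A) = unfoldₙ(X ×₁ A₁ᵀ ⋯ ×_{n−1} A_{n−1}ᵀ ×_{n+1} A_{n+1}ᵀ ⋯ ×_N A_Nᵀ)`. -/
noncomputable def Gmat {N : ℕ} {I r : Fin N → ℕ} (X : ((n : Fin N) → Fin (I n)) → ℝ)
    (A : (n : Fin N) → Matrix (Fin (I n)) (Fin (r n)) ℝ) (n : Fin N) :
    Matrix (Fin (I n)) ((m : {m : Fin N // m ≠ n}) → Fin (r m.1)) ℝ :=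
  fun j c => ∑ idx : ((m : {m : Fin N // m ≠ n}) → Fin (I m.1)),
    X (fun i => if h : i = n then Fin.cast (by rw [h]) j else idx ⟨i, h⟩) *
      ∏ m : {m : Fin N // m ≠ n}, A m.1 (idx m) (c m)

/-- `f(A) = ‖X ×₁ A₁ᵀ ⋯ ×_N A_Nᵀ‖_F²`. -/
noncomputable def fval {N : ℕ} {I r : Fin N → ℕ} (X : ((n : Fin N) → Fin (I n)) → ℝ)
    (A : (n : Fin N) → Matrix (Fin (I n)) (Fin (r n)) ℝ) : ℝ :=
  ∑ c : ((n : Fin N) → Fin (r n)),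
    (∑ idx : ((n : Fin N) → Fin (I n)), X idx * ∏ n, A n (idx n) (c n)) ^ 2

/-- A critical point: `Gₙ(A)Gₙ(A)ᵀAₙ = AₙAₙᵀGₙ(A)Gₙ(A)ᵀAₙ` for all `n`. -/
def Critical {N : ℕ} {I r : Fin N → ℕ} (X : ((n : Fin N) → Fin (I n)) → ℝ)
    (A : (n : Fin N) → Matrix (Fin (I n)) (Fin (r n)) ℝ) : Prop :=
  ∀ n, Gmat X A n * (Gmat X A n)ᵀ * A n =
    A n * (A n)ᵀ * (Gmat X A n * (Gmat X A n)ᵀ * A n)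

/-- A block-wise maximizer. -/
def BlockMax {N : ℕ} {I r : Fin N → ℕ} (X : ((n : Fin N) → Fin (I n)) → ℝ)
    (A : (n : Fin N) → Matrix (Fin (I n)) (Fin (r n)) ℝ) : Prop :=
  ∀ n, ∀ B : Matrix (Fin (I n)) (Fin (r n)) ℝ, Bᵀ * B = 1 →
    froSq (Bᵀ * Gmat X A n) ≤ froSq ((A n)ᵀ * Gmat X A n)

/-- Block-nondegeneracy: `σ_{rₙ}(Gₙ(A)) > σ_{rₙ+1}(Gₙ(A))` for all `n`. -/
def NonDeg {N : ℕ} {I r : Fin N → ℕ} (X : ((n : Fin N) → Fin (I n)) → ℝ)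
    (A : (n : Fin N) → Matrix (Fin (I n)) (Fin (r n)) ℝ) : Prop :=
  ∀ n, sval (Gmat X A n) (r n + 1) < sval (Gmat X A n) (r n)

/-- The hybrid tuple used in HOOI: the already-updated blocks `i < n` come from
`Anew`, the rest from `Aold`. -/
def hyb {N : ℕ} {I r : Fin N → ℕ}
    (Aold Anew : (n : Fin N) → Matrix (Fin (I n)) (Fin (r n)) ℝ) (n : Fin N) :
    (i : Fin N) → Matrix (Fin (I i)) (Fin (r i)) ℝ :=
  fun i => if i < n then Anew i else Aold i

/-- `Gₙ^k = unfoldₙ(X ×₁ (A₁^{k+1})ᵀ ⋯ ×_{n−1} (A_{n−1}^{k+1})ᵀ ×_{n+1} (A_{n+1}^k)ᵀ ⋯ ×_N (A_N^k)ᵀ)`. -/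
noncomputable def Gseq {N : ℕ} {I r : Fin N → ℕ} (X : ((n : Fin N) → Fin (I n)) → ℝ)
    (A : ℕ → (n : Fin N) → Matrix (Fin (I n)) (Fin (r n)) ℝ) (k : ℕ) (n : Fin N) :
    Matrix (Fin (I n)) ((m : {m : Fin N // m ≠ n}) → Fin (r m.1)) ℝ :=
  Gmat X (hyb (A k) (A (k + 1)) n) n

/-- A HOOI sequence. -/
def IsHOOI {N : ℕ} {I r : Fin N → ℕ} (X : ((n : Fin N) → Fin (I n)) → ℝ)
    (A : ℕ → (n : Fin N) → Matrix (Fin (I n)) (Fin (r n)) ℝ) : Prop :=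
  (∀ k, TFeas (A k)) ∧
  ∀ k (n : Fin N), ∀ B : Matrix (Fin (I n)) (Fin (r n)) ℝ, Bᵀ * B = 1 →
    froSq (Bᵀ * Gseq X A k n) ≤ froSq ((A (k + 1) n)ᵀ * Gseq X A k n)

/-- A greedy HOOI sequence. -/
def IsGreedyHOOI {N : ℕ} {I r : Fin N → ℕ} (X : ((n : Fin N) → Fin (I n)) → ℝ)
    (A : ℕ → (n : Fin N) → Matrix (Fin (I n)) (Fin (r n)) ℝ) : Prop :=
  IsHOOI X A ∧
  ∀ k (n : Fin N), ∀ B : Matrix (Fin (I n)) (Fin (r n)) ℝ, Bᵀ * B = 1 →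
    (∀ C : Matrix (Fin (I n)) (Fin (r n)) ℝ, Cᵀ * C = 1 →
      froSq (Cᵀ * Gseq X A k n) ≤ froSq (Bᵀ * Gseq X A k n)) →
    fro (A (k + 1) n - A k n) ≤ fro (B - A k n)

/-- `Ā` is a limit point of the sequence `{A^k}` (blockwise in Frobenius norm). -/
def IsLimitPt {N : ℕ} {I r : Fin N → ℕ}
    (A : ℕ → (n : Fin N) → Matrix (Fin (I n)) (Fin (r n)) ℝ)
    (Abar : (n : Fin N) → Matrix (Fin (I n)) (Fin (r n)) ℝ) : Prop :=
  ∃ φ : ℕ → ℕ, StrictMono φ ∧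
    ∀ n, Tendsto (fun k => fro (A (φ k) n - Abar n)) atTop (nhds 0)

/-- `‖A − B‖_F = √(∑ₙ ‖Aₙ − Bₙ‖_F²)` on tuples. -/
noncomputable def tdist {N : ℕ} {I r : Fin N → ℕ}
    (A B : (n : Fin N) → Matrix (Fin (I n)) (Fin (r n)) ℝ) : ℝ :=
  Real.sqrt (∑ n, froSq (A n - B n))

/-- A local maximizer of `f` over the feasible set. -/
def LocalMax {N : ℕ} {I r : Fin N → ℕ} (X : ((n : Fin N) → Fin (I n)) → ℝ)
    (A : (n : Fin N) → Matrix (Fin (I n)) (Fin (r n)) ℝ) : Prop :=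
  TFeas A ∧ ∃ ε > (0 : ℝ), ∀ B : (n : Fin N) → Matrix (Fin (I n)) (Fin (r n)) ℝ,
    TFeas B → tdist B A ≤ ε → fval X B ≤ fval X A

/-- A globally optimal solution. -/
def GlobalMax {N : ℕ} {I r : Fin N → ℕ} (X : ((n : Fin N) → Fin (I n)) → ℝ)
    (A : (n : Fin N) → Matrix (Fin (I n)) (Fin (r n)) ℝ) : Prop :=
  TFeas A ∧ ∀ B : (n : Fin N) → Matrix (Fin (I n)) (Fin (r n)) ℝ,
    TFeas B → fval X B ≤ fval X A

/-!
Near a block-nondegenerate maximizer, the spectral gap of the Gram matrices `GₙGₙᵀ`, together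
with the choice of the closest maximizer in each update (a Procrustes problem), makes a greedy
sweep of length `d` increase `f` by at least `c d²`. Each updated block is stationary for the
Gram matrix it was updated with, so after the sweep the first-order residual is at most `C₁ d`.
On the whole feasible set, `|f(A) - f(B)| ≤ C (residual(A) ‖A - B‖ + ‖A - B‖²)`.

These three facts suffice for a Łojasiewicz-type argument. Put `g = max f - f`, a polynomial on a
compact semialgebraic set, and select on each level set of `g` a point `X(t)` of minimal
residual, ties being broken lexicographically. By quantifier elimination `t ↦ X(t)` is
semialgebraic, hence of bounded variation. With `L` its variation function, comparing `X(g(x))`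
with `X(g(y))` gives `g(x) - g(y) ≤ C (residual(y) ΔL + ΔL²)`, and so the length of a sweep from
`A` to `B` is at most `Φ(g(A)) - Φ(g(B))` for a function `Φ` built from `L`. These bounds
telescope: the iterates stay near the maximizer, they are Cauchy, and their limit has residual
zero. As `L` is differentiable almost everywhere, there is no point of residual zero on the
levels of `g` close to but different from zero, so the limit is a global maximizer.
-/

namespace HOOI

open Set Polynomial
open SignType (sign)
open scoped Topology

section SignDiagrams

theorem sign_eq_of_forall_uIcc_ne_zero {f : ℝ → ℝ} {x y : ℝ} (hf : ContinuousOn f (uIcc x y))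
    (h : ∀ z ∈ uIcc x y, f z ≠ 0) : sign (f x) = sign (f y) := by
  have hsign : ContinuousOn (fun z => sign (f z)) (uIcc x y) := fun z hz =>
    (continuousAt_sign_of_ne_zero (h z hz)).comp_continuousWithinAt (hf z hz)
  exact isPreconnected_uIcc.constant hsign left_mem_uIcc right_mem_uIcc

theorem sign_eq_of_sign_sub_eq {a b : ℝ} {s : SignType} (hab : sign (a - b) = s)
    (hb : sign b = 0 ∨ sign b = s) : sign a = s := by
  subst hab
  rcases lt_trichotomy a b with h | rfl | h
  · rw [sign_neg (sub_neg.2 h)] at hb ⊢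
    simp only [sign_eq_zero_iff, sign_eq_neg_one_iff] at hb
    exact sign_neg (by rcases hb with hb | hb <;> linarith)
  · simpa using hb
  · rw [sign_pos (sub_pos.2 h)] at hb ⊢
    simp only [sign_eq_zero_iff, sign_eq_one_iff] at hb
    exact sign_pos (by rcases hb with hb | hb <;> linarith)

theorem sign_eval_sub_eval {p : ℝ[X]} {x w : ℝ}
    (h : ∀ z ∈ uIcc x w, z ≠ w → p.derivative.eval z ≠ 0) :
    sign (p.eval x - p.eval w) = sign (x - w) * sign (p.derivative.eval x) := by
  rcases eq_or_ne x w with rfl | hxw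
  · simp
  obtain ⟨ξ, hξ, hslope⟩ : ∃ ξ ∈ uIcc x w, ξ ≠ w ∧
      p.eval x - p.eval w = (x - w) * p.derivative.eval ξ := by
    rcases lt_or_gt_of_ne hxw with hlt | hlt
    all_goals
      obtain ⟨ξ, hξ, hslope⟩ := exists_deriv_eq_slope (fun z => p.eval z) hlt
        p.continuous.continuousOn p.differentiable.differentiableOn
      rw [Polynomial.deriv, eq_div_iff (by linarith)] at hslope
      refine ⟨ξ, mem_uIcc.2 ?_, ?_, by linarith⟩
    exacts [.inl ⟨hξ.1.le, hξ.2.le⟩, hξ.2.ne, .inr ⟨hξ.1.le, hξ.2.le⟩, hξ.1.ne']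
  have hsub : ∀ z ∈ uIcc x ξ, z ∈ uIcc x w ∧ z ≠ w := by
    intro z hz
    refine ⟨uIcc_subset_uIcc left_mem_uIcc hξ hz, ?_⟩
    rintro rfl
    exact hslope.1 (eq_of_mem_uIcc_of_mem_uIcc' hz hξ).symm
  rw [hslope.2, sign_mul, sign_eq_of_forall_uIcc_ne_zero p.derivative.continuous.continuousOn
    fun z hz => h z (hsub z hz).1 (hsub z hz).2]

theorem exists_gt_eval_mul_derivative_eval_eq_zero {p : ℝ[X]} {x : ℝ}
    (hdec : p.eval x * p.derivative.eval x < 0) :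
    ∃ z > x, p.eval z * p.derivative.eval z = 0 := by
  by_contra! hnone
  have hne : ∀ z ∈ Ici x, p.eval z * p.derivative.eval z ≠ 0 := fun z hz =>
    (mem_Ici.1 hz).eq_or_lt.elim (fun h => h ▸ hdec.ne) (hnone z)
  have hanti : AntitoneOn (fun z => p.eval z ^ 2) (Ici x) := by
    refine antitoneOn_of_deriv_nonpos (convex_Ici x) (by fun_prop) (by fun_prop) fun z hz => ?_
    have hz : x ≤ z := interior_subset hz
    have hsign : sign (p.eval x * p.derivative.eval x) = sign (p.eval z * p.derivative.eval z) :=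
      sign_eq_of_forall_uIcc_ne_zero (f := fun z => p.eval z * p.derivative.eval z)
        (by fun_prop) fun y hy => hne y (by rw [uIcc_of_le hz] at hy; exact hy.1)
    rw [sign_neg hdec, eq_comm, sign_eq_neg_one_iff] at hsign
    simp only [deriv_fun_pow p.differentiableAt, Polynomial.deriv]
    norm_num
    linarith
  have hconst : p.degree ≤ 0 := (isBoundedUnder_abs_atTop_iff p).1 ⟨|p.eval x|,
    Filter.eventually_map.2 <| (Filter.eventually_ge_atTop x).mono fun z hz =>
      sq_le_sq.1 (hanti self_mem_Ici hz hz)⟩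
  rw [eq_C_of_degree_le_zero hconst] at hdec
  simp at hdec

theorem exists_gt_adjacent {p : ℝ[X]} {A : Finset ℝ} (hA : ∀ a, p.derivative.eval a = 0 → a ∈ A)
    {x : ℝ} (hx : x ∉ A) (hdec : p.eval x * p.derivative.eval x < 0) :
    ∃ w > x, (w ∈ A ∨ p.eval w = 0) ∧ (∀ a ∈ A, a ∈ uIcc x w → a = w) ∧
      (sign (p.eval w) = 0 ∨ sign (p.eval w) = sign (p.eval x)) := by
  classical
  have hp0 : p ≠ 0 := by rintro rfl; simp at hdec
  have hpx : p.eval x ≠ 0 := left_ne_zero_of_mul hdec.ne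
  set Z := (A ∪ p.roots.toFinset).filter (x < ·) with hZ
  have memZ : ∀ z, z ∈ Z ↔ (z ∈ A ∨ p.eval z = 0) ∧ x < z := by simp [hZ, hp0]
  have hne : Z.Nonempty := by
    obtain ⟨z, hxz, hz⟩ := exists_gt_eval_mul_derivative_eval_eq_zero hdec
    exact ⟨z, (memZ z).2 ⟨((mul_eq_zero.1 hz).symm.imp_left (hA z)), hxz⟩⟩
  have hwZ := (memZ _).1 (Z.min'_mem hne)
  set w := Z.min' hne
  have hbelow : ∀ z, x < z → z < w → ¬(z ∈ A ∨ p.eval z = 0) := fun z hxz hzw h =>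
    hzw.not_ge (Z.min'_le z ((memZ z).2 ⟨h, hxz⟩))
  refine ⟨w, hwZ.2, hwZ.1, fun a ha haw => ?_, ?_⟩
  · rw [uIcc_of_le hwZ.2.le] at haw
    refine haw.2.eq_of_not_lt fun hlt => hbelow a (haw.1.lt_of_ne ?_) hlt (.inl ha)
    rintro rfl
    exact hx ha
  · refine or_iff_not_imp_left.2 fun hw => (sign_eq_of_forall_uIcc_ne_zero
      p.continuous.continuousOn fun z hz hz0 => ?_).symm
    rw [uIcc_of_le hwZ.2.le] at hz
    refine hbelow z (hz.1.lt_of_ne ?_) (hz.2.lt_of_ne ?_) (.inr hz0)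
    · rintro rfl; exact hpx hz0
    · rintro rfl; simp [hz0] at hw

theorem exists_adjacent {p : ℝ[X]} {A : Finset ℝ} (hA : ∀ a, p.derivative.eval a = 0 → a ∈ A)
    {x : ℝ} (hx : x ∉ A) (hpx : p.eval x ≠ 0) :
    ∃ w, (w ∈ A ∨ p.eval w = 0) ∧ (∀ a ∈ A, a ∈ uIcc x w → a = w) ∧
      (sign (p.eval w) = 0 ∨ sign (p.eval w) = sign (p.eval x)) ∧
      sign (x - w) = sign (p.eval x) * sign (p.derivative.eval x) := by
  classical
  have hdx : p.derivative.eval x ≠ 0 := fun h => hx (hA x h)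
  simp only [← sign_mul]
  rcases (mul_ne_zero hpx hdx).lt_or_gt with h | h
  · obtain ⟨w, hxw, hw, hAw, hs⟩ := exists_gt_adjacent hA hx h
    exact ⟨w, hw, hAw, hs, by rw [sign_neg h, sign_neg (sub_neg.2 hxw)]⟩
  · obtain ⟨w, hxw, hw, hAw, hs⟩ := exists_gt_adjacent (p := p.comp (-X)) (A := A.image Neg.neg)
      (x := -x) (fun a ha => Finset.mem_image.2
        ⟨-a, hA _ (by simpa [derivative_comp] using ha), by simp⟩)
      (by simpa using hx) (by simpa [derivative_comp] using h)
    refine ⟨-w, by simpa [neg_eq_iff_eq_neg] using hw, fun a ha haw => ?_, by simpa using hs, ?_⟩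
    · refine neg_eq_iff_eq_neg.1 (hAw (-a) (Finset.mem_image_of_mem _ ha) ?_)
      rw [mem_uIcc] at haw ⊢
      rcases haw with haw | haw
      · exact .inr ⟨by linarith, by linarith⟩
      · exact .inl ⟨by linarith, by linarith⟩
    · rw [sign_pos h, sign_pos (by linarith)]

theorem lt_iff_lt_of_notMem_uIcc {α : Type*} [LinearOrder α] {b x y : α} (hb : b ∉ uIcc x y) :
    b < x ↔ b < y := by
  rw [mem_uIcc] at hb
  grind

theorem gt_iff_gt_of_notMem_uIcc {α : Type*} [LinearOrder α] {b x y : α} (hb : b ∉ uIcc x y) :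
    x < b ↔ y < b := by
  rw [mem_uIcc] at hb
  grind

theorem sign_sub_of_strictMono {f : ℝ → ℝ} (hf : StrictMono f) (x y : ℝ) :
    sign (f x - f y) = sign (x - y) := by
  rcases lt_trichotomy x y with h | rfl | h
  · rw [sign_neg (sub_neg.2 h), sign_neg (sub_neg.2 (hf h))]
  · simp
  · rw [sign_pos (sub_pos.2 h), sign_pos (sub_pos.2 (hf h))]

section OrderIso

variable {𝕜 : Type*} [Field 𝕜] [LinearOrder 𝕜] [IsStrictOrderedRing 𝕜]

theorem exists_orderIso_eqOn_Iic {b m y : 𝕜} (hm : b < m) (hy : b < y) :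
    ∃ θ : 𝕜 ≃o 𝕜, (∀ x ≤ b, θ x = x) ∧ θ m = y := by
  have hslope : 0 < (y - b) / (m - b) := div_pos (sub_pos.2 hy) (sub_pos.2 hm)
  set k := (y - b) / (m - b) with hk
  set θ : 𝕜 → 𝕜 := fun x => if x ≤ b then x else b + (x - b) * k with hθ
  have hmono : StrictMono θ := by
    intro x z hxz
    simp only [hθ]
    split_ifs with hx hz hz
    · exact hxz
    · have : 0 < (z - b) * k := mul_pos (sub_pos.2 (not_le.1 hz)) hslope
      linarith
    · exact absurd (hxz.le.trans hz) hx
    · have := mul_lt_mul_of_pos_right (sub_lt_sub_right hxz b) hslope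
      linarith
  have hsurj : Function.Surjective θ := by
    intro z
    rcases le_or_gt z b with hz | hz
    · exact ⟨z, if_pos hz⟩
    · have hpos : 0 < (z - b) / k := div_pos (sub_pos.2 hz) hslope
      refine ⟨b + (z - b) / k, (if_neg (by linarith)).trans ?_⟩
      rw [add_sub_cancel_left, div_mul_cancel₀ _ hslope.ne', add_sub_cancel]
  refine ⟨hmono.orderIsoOfSurjective θ hsurj, fun x hx => if_pos hx, (if_neg hm.not_ge).trans ?_⟩
  rw [hk, mul_div_cancel₀ _ (sub_pos.2 hm).ne', add_sub_cancel]

theorem exists_orderIso_eqOn {φ : 𝕜 → 𝕜} {C : Finset 𝕜} (hφ : StrictMonoOn φ C) :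
    ∃ ψ : 𝕜 ≃o 𝕜, ∀ c ∈ C, ψ c = φ c := by
  induction C using Finset.induction_on_max with
  | empty => exact ⟨OrderIso.refl 𝕜, by simp⟩
  | insert m s hm ih =>
    obtain ⟨ψ, hψ⟩ := ih (hφ.mono (by simp))
    rcases s.eq_empty_or_nonempty with rfl | hne
    · exact ⟨OrderIso.addRight (φ m - m), by simp⟩
    have hb : s.max' hne ∈ s := s.max'_mem hne
    have hψm : φ (s.max' hne) < ψ m := hψ _ hb ▸ ψ.strictMono (hm _ hb)
    obtain ⟨θ, hθ, hθm⟩ := exists_orderIso_eqOn_Iic hψm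
      (hφ (by simp [hb]) (by simp) (hm _ hb))
    refine ⟨ψ.trans θ, fun c hc => ?_⟩
    rcases Finset.mem_insert.1 hc with rfl | hc
    · exact hθm
    · rw [OrderIso.trans_apply, hψ c hc]
      exact hθ _ (hφ.monotoneOn (by simp [hc]) (by simp [hb]) (s.le_max' c hc))

end OrderIso

section Lift

variable {p q : ℝ[X]} {A : Finset ℝ} {ψ : ℝ ≃o ℝ}

theorem exists_root_of_sign_comp (hA : ∀ a, p.derivative.eval a = 0 → a ∈ A)
    (hderiv : ∀ x, sign (p.derivative.eval x) = sign (q.derivative.eval (ψ x)))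
    (hsign : ∀ a ∈ A, sign (p.eval a) = sign (q.eval (ψ a)))
    {c : ℝ} (hc : c ∉ A) (hpc : p.eval c = 0) :
    ∃ c', q.eval c' = 0 ∧ ∀ a ∈ A, ψ a ∉ uIcc (ψ c) c' := by
  have hmem : ∀ a, ψ a ∈ A.image ψ ↔ a ∈ A := fun a => by simp
  by_cases hqc : q.eval (ψ c) = 0
  · exact ⟨ψ c, hqc, fun a ha h => hc (ψ.injective (by simpa using h) ▸ ha)⟩
  have hB : ∀ b, q.derivative.eval b = 0 → b ∈ A.image ψ := fun b hb => by
    obtain ⟨a, rfl⟩ := ψ.surjective b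
    exact (hmem a).2 (hA a (sign_eq_zero_iff.1 (by rw [hderiv, hb, sign_zero])))
  have hdq : q.derivative.eval (ψ c) ≠ 0 := fun h => hc ((hmem c).1 (hB _ h))
  obtain ⟨w, hw, hBw, hsw, hcw⟩ := exists_adjacent hB (mt (hmem c).1 hc) hqc
  have hwB : w ∉ A.image ψ := by
    intro hwB
    obtain ⟨a, ha, rfl⟩ := Finset.mem_image.1 hwB
    have hpa : sign (p.eval c - p.eval a) = sign (c - a) * sign (p.derivative.eval c) := by
      refine sign_eval_sub_eval fun z hz hza hz0 => hza (ψ.injective (hBw _ ?_ ?_))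
      · exact (hmem z).2 (hA z hz0)
      · exact ψ.monotone.mapsTo_uIcc hz
    rw [hpc, zero_sub, Left.sign_neg, ← sign_sub_of_strictMono ψ.strictMono, hcw, hderiv, mul_assoc,
      ← sign_mul, sign_pos (mul_self_pos.2 hdq), mul_one, hsign a ha] at hpa
    rcases hsw with h | h <;> rw [h] at hpa
    · exact hqc (sign_eq_zero_iff.1 (by simpa using hpa.symm))
    · exact hqc (sign_eq_zero_iff.1 (SignType.self_eq_neg_iff.1 hpa.symm))
  exact ⟨w, hw.resolve_left hwB, fun a ha haw => hwB (hBw _ ((hmem a).2 ha) haw ▸ (hmem a).2 ha)⟩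

theorem sign_comp_eq_of_eqOn {ψ' : ℝ ≃o ℝ} (hA : ∀ a, p.eval a = 0 → a ∈ A)
    (hsign : ∀ x, sign (p.eval x) = sign (q.eval (ψ x))) (hψ : ∀ a ∈ A, ψ' a = ψ a) (x : ℝ) :
    sign (p.eval x) = sign (q.eval (ψ' x)) := by
  by_cases hx : x ∈ A
  · rw [hψ x hx, hsign]
  rw [hsign]
  refine sign_eq_of_forall_uIcc_ne_zero q.continuous.continuousOn fun z hz hz0 => ?_
  obtain ⟨a, rfl⟩ := ψ.surjective z
  have ha : a ∈ A := hA a (sign_eq_zero_iff.1 (by rw [hsign, hz0, sign_zero]))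
  have hax : a ≠ x := fun h => hx (h ▸ ha)
  rcases mem_uIcc.1 hz with ⟨h₁, h₂⟩ | ⟨h₁, h₂⟩ <;> rw [← hψ a ha, ψ'.le_iff_le] at *
  · exact hax (h₂.antisymm (ψ.le_iff_le.1 (hψ a ha ▸ h₁)))
  · exact hax ((ψ.le_iff_le.1 (hψ a ha ▸ h₂)).antisymm h₁)

theorem exists_strictMonoOn_sign_eq (hA : ∀ a, p.derivative.eval a = 0 → a ∈ A)
    (hderiv : ∀ x, sign (p.derivative.eval x) = sign (q.derivative.eval (ψ x)))
    (hsign : ∀ a ∈ A, sign (p.eval a) = sign (q.eval (ψ a))) :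
    ∃ φ : ℝ → ℝ, StrictMonoOn φ {c | c ∈ A ∨ p.eval c = 0} ∧ (∀ a ∈ A, φ a = ψ a) ∧
      ∀ c, c ∈ A ∨ p.eval c = 0 → sign (p.eval c) = sign (q.eval (φ c)) := by
  have hex : ∀ c, ∃ c', (c ∈ A → c' = ψ c) ∧
      (c ∉ A → p.eval c = 0 → q.eval c' = 0 ∧ ∀ a ∈ A, ψ a ∉ uIcc (ψ c) c') := by
    intro c
    by_cases hc : c ∉ A ∧ p.eval c = 0
    · obtain ⟨c', hc'⟩ := exists_root_of_sign_comp hA hderiv hsign hc.1 hc.2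
      exact ⟨c', fun h => absurd h hc.1, fun _ _ => hc'⟩
    · exact ⟨ψ c, fun _ => rfl, fun h₁ h₂ => absurd ⟨h₁, h₂⟩ hc⟩
  choose φ hφA hφ using hex
  refine ⟨φ, fun x hx y hy hxy => ?_, hφA, fun c hc => ?_⟩
  · have hψ : ψ x < ψ y := ψ.strictMono hxy
    by_cases hxA : x ∈ A <;> by_cases hyA : y ∈ A
    · rwa [hφA x hxA, hφA y hyA]
    · rw [hφA x hxA]
      exact (lt_iff_lt_of_notMem_uIcc ((hφ y hyA (hy.resolve_left hyA)).2 x hxA)).1 hψ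
    · rw [hφA y hyA]
      exact (gt_iff_gt_of_notMem_uIcc ((hφ x hxA (hx.resolve_left hxA)).2 y hyA)).1 hψ
    · have hpx := hx.resolve_left hxA
      have hpy := hy.resolve_left hyA
      obtain ⟨z, hz, hz0⟩ := exists_deriv_eq_zero (f := fun z => p.eval z) hxy
        p.continuous.continuousOn (hpx.trans hpy.symm)
      have hzA : z ∈ A := hA z (by rwa [Polynomial.deriv] at hz0)
      exact ((gt_iff_gt_of_notMem_uIcc ((hφ x hxA hpx).2 z hzA)).1 (ψ.strictMono hz.1)).trans
        ((lt_iff_lt_of_notMem_uIcc ((hφ y hyA hpy).2 z hzA)).1 (ψ.strictMono hz.2))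
  · by_cases hcA : c ∈ A
    · rw [hφA c hcA, hsign c hcA]
    · have hpc := hc.resolve_left hcA
      rw [hpc, (hφ c hcA hpc).1]

theorem exists_orderIso_sign_comp_eq (hA : ∀ a, p.derivative.eval a = 0 → a ∈ A)
    (hderiv : ∀ x, sign (p.derivative.eval x) = sign (q.derivative.eval (ψ x)))
    (hsign : ∀ a ∈ A, sign (p.eval a) = sign (q.eval (ψ a))) :
    ∃ ψ' : ℝ ≃o ℝ, (∀ a ∈ A, ψ' a = ψ a) ∧ ∀ x, sign (p.eval x) = sign (q.eval (ψ' x)) := by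
  have hp : p ≠ 0 := by
    rintro rfl
    obtain ⟨a, ha⟩ := Infinite.exists_notMem_finset A
    exact ha (hA a (by simp))
  obtain ⟨φ, hφmono, hφA, hφ⟩ := exists_strictMonoOn_sign_eq hA hderiv hsign
  have hC : ∀ c, c ∈ A ∪ p.roots.toFinset ↔ c ∈ A ∨ p.eval c = 0 := fun c => by simp [hp]
  obtain ⟨ψ', hψ'⟩ := exists_orderIso_eqOn (C := A ∪ p.roots.toFinset) (φ := φ)
    (hφmono.mono fun c hc => (hC c).1 hc)
  have hψ'A : ∀ a ∈ A, ψ' a = ψ a := fun a ha => (hψ' a ((hC a).2 (.inl ha))).trans (hφA a ha)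
  have hψ'C : ∀ c, c ∈ A ∨ p.eval c = 0 → sign (p.eval c) = sign (q.eval (ψ' c)) := fun c hc => by
    rw [hψ' c ((hC c).2 hc), hφ c hc]
  refine ⟨ψ', hψ'A, fun x => ?_⟩
  by_cases hx : x ∈ A ∨ p.eval x = 0
  · exact hψ'C x hx
  obtain ⟨hxA, hpx⟩ := not_or.1 hx
  obtain ⟨w, hw, hAw, hsw, hxw⟩ := exists_adjacent hA hxA hpx
  have hdx : p.derivative.eval x ≠ 0 := fun h => hxA (hA x h)
  have hdψ : sign (p.derivative.eval x) = sign (q.derivative.eval (ψ' x)) :=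
    sign_comp_eq_of_eqOn hA hderiv hψ'A x
  have hqsub : sign (q.eval (ψ' x) - q.eval (ψ' w)) = sign (p.eval x) := by
    rw [sign_eval_sub_eval, sign_sub_of_strictMono ψ'.strictMono, hxw, ← hdψ, mul_assoc,
      ← sign_mul, sign_pos (mul_self_pos.2 hdx), mul_one]
    intro z hz hzw hz0
    obtain ⟨b, rfl⟩ := ψ.surjective z
    have hb : b ∈ A := hA b (sign_eq_zero_iff.1 (by rw [hderiv, hz0, sign_zero]))
    rw [← hψ'A b hb] at hz hzw
    refine hzw (congrArg ψ' (hAw b hb ?_))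
    simpa using ψ'.symm.monotone.mapsTo_uIcc hz
  rw [hψ'C w hw] at hsw
  exact (sign_eq_of_sign_sub_eq hqsub hsw).symm

end Lift
theorem exists_orderIso_insert {ι : Type*} {F : Finset ι} {P Q : ι → ℝ[X]} {ψ : ℝ ≃o ℝ}
    (hF : ∀ i ∈ F, ∀ x, sign ((P i).eval x) = sign ((Q i).eval (ψ x))) {p q : ℝ[X]}
    (hderiv : ∃ i ∈ F, P i = p.derivative ∧ Q i = q.derivative) (hp : p.derivative ≠ 0)
    (hsign : ∀ i ∈ F, P i ≠ 0 → ∀ a, (P i).eval a = 0 → sign (p.eval a) = sign (q.eval (ψ a))) :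
    ∃ ψ' : ℝ ≃o ℝ, (∀ i ∈ F, ∀ x, sign ((P i).eval x) = sign ((Q i).eval (ψ' x))) ∧
      ∀ x, sign (p.eval x) = sign (q.eval (ψ' x)) := by
  classical
  set A := F.biUnion fun i => (P i).roots.toFinset with hA
  have memA : ∀ a, a ∈ A ↔ ∃ i ∈ F, P i ≠ 0 ∧ (P i).eval a = 0 := by simp [hA]
  obtain ⟨i₀, hi₀, hPi₀, hQi₀⟩ := hderiv
  obtain ⟨ψ', hψ', hpq⟩ := exists_orderIso_sign_comp_eq (p := p) (q := q) (A := A) (ψ := ψ)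
    (fun a ha => (memA a).2 ⟨i₀, hi₀, by rwa [hPi₀], by rwa [hPi₀]⟩)
    (fun x => by rw [← hPi₀, ← hQi₀, hF i₀ hi₀])
    (fun a ha => by
      obtain ⟨i, hi, hPi, hPia⟩ := (memA a).1 ha
      exact hsign i hi hPi a hPia)
  refine ⟨ψ', fun i hi x => ?_, hpq⟩
  by_cases hPi : P i = 0
  · have h := hF i hi (ψ.symm (ψ' x))
    rw [OrderIso.apply_symm_apply] at h
    rw [← h, hPi, eval_zero, eval_zero]
  · exact sign_comp_eq_of_eqOn (fun a ha => (memA a).2 ⟨i, hi, hPi, ha⟩) (hF i hi) hψ' x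

end SignDiagrams

section Elimination

variable {R : Type*} [CommRing R]

theorem natDegree_mul_sub_lt {p q : R[X]} {n N : ℕ} (hq : q.natDegree ≤ n) (hnN : n ≤ N)
    (hp : p.natDegree ≤ N) (hN : 0 < N) :
    (C (q.coeff n) * p - C (p.coeff N) * X ^ (N - n) * q).natDegree < N := by
  refine (Nat.lt_iff_le_pred hN).2 (natDegree_le_iff_coeff_eq_zero.2 fun i hi => ?_)
  rw [coeff_sub, mul_assoc, coeff_C_mul, coeff_C_mul, coeff_X_pow_mul', if_pos (by omega)]
  rcases (by omega : i = N ∨ N < i) with rfl | hi'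
  · rw [Nat.sub_sub_self hnN]; ring
  · rw [coeff_eq_zero_of_natDegree_lt (by omega : p.natDegree < i),
      coeff_eq_zero_of_natDegree_lt (by omega : q.natDegree < i - (N - n))]
    ring

theorem exists_pseudo_divMod {q : R[X]} {n : ℕ} (hn : 0 < n) (hq : q.natDegree ≤ n) (p : R[X]) :
    ∃ (k : ℕ) (s r : R[X]), C (q.coeff n) ^ k * p = s * q + r ∧ r.natDegree < n := by
  induction hN : p.natDegree using Nat.strong_induction_on generalizing p with
  | _ N ih =>
    rcases lt_or_ge N n with hNn | hnN
    · exact ⟨0, 0, p, by simp, hN.trans_lt hNn⟩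
    · obtain ⟨k, s, r, h, hr⟩ := ih _ (natDegree_mul_sub_lt hq hnN hN.le (hn.trans_le hnN)) _ rfl
      refine ⟨k + 1, s + C (q.coeff n) ^ k * C (p.coeff N) * X ^ (N - n), r, ?_, hr⟩
      linear_combination h

/- The specialisation of `q` along `φ` may drop in degree; dividing by the truncation of `q` at the
degree `n` of the specialisation makes the remainder usable for all such `φ` at once. -/
theorem exists_pseudo_remainder {S : Type*} [CommRing S] (p q : R[X]) {n : ℕ} (hn : 0 < n) :
    ∃ (r : R[X]) (k : ℕ), r.natDegree < n ∧ ∀ φ : R →+* S, (q.map φ).natDegree ≤ n →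
      ∀ a, (q.map φ).eval a = 0 → φ (q.coeff n) ^ k * (p.map φ).eval a = (r.map φ).eval a := by
  set t : R[X] := PowerSeries.trunc (n + 1) (q : PowerSeries R) with ht
  have coeff_t : ∀ i, t.coeff i = if i < n + 1 then q.coeff i else 0 := fun i => by
    rw [ht, PowerSeries.coeff_trunc, Polynomial.coeff_coe]
  obtain ⟨k, s, r, h, hr⟩ := exists_pseudo_divMod hn
    (Nat.lt_succ_iff.1 (PowerSeries.natDegree_trunc_lt (q : PowerSeries R) n)) p
  rw [← ht, coeff_t, if_pos n.lt_succ_self] at h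
  refine ⟨r, k, hr, fun φ hφ a ha => ?_⟩
  have hmap : q.map φ = t.map φ := by
    ext i
    rw [coeff_map, coeff_map, coeff_t]
    split_ifs with hi
    · rfl
    · rw [← coeff_map, coeff_eq_zero_of_natDegree_lt (by omega), map_zero]
  have heval := congrArg (fun f => (f.map φ).eval a) h
  simpa [← hmap, ha] using heval

theorem natDegree_map_congr {S : Type*} [Semiring S] {φ φ' : R →+* S} {q : R[X]}
    (h : ∀ n, φ (q.coeff n) = 0 ↔ φ' (q.coeff n) = 0) :
    (q.map φ).natDegree = (q.map φ').natDegree := by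
  have hsupp : (q.map φ).support = (q.map φ').support := by
    ext n
    simpa using not_congr (h n)
  exact natDegree_eq_of_degree_eq (congrArg Finset.max hsupp)

/-- Two real specialisations `φ`, `φ'` of `R` give the same signs to the elements of `Q`. -/
def SignAgree (Q : Finset R) (φ φ' : R →+* ℝ) : Prop :=
  ∀ a ∈ Q, sign (φ a) = sign (φ' a)

theorem SignAgree.mono {Q Q' : Finset R} {φ φ' : R →+* ℝ} (h : SignAgree Q' φ φ') (hQ : Q ⊆ Q') :
    SignAgree Q φ φ' := fun a ha => h a (hQ ha)

/-- The sign diagram on the real line of the specialisations of the polynomials in `F` is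
determined, up to an increasing reparametrisation of the line, by the signs of finitely many
elements of `R`. -/
def SignDetermined (F : Finset R[X]) : Prop :=
  ∃ Q : Finset R, ∀ φ φ' : R →+* ℝ, SignAgree Q φ φ' →
    ∃ ψ : ℝ ≃o ℝ, ∀ p ∈ F, ∀ x, sign ((p.map φ).eval x) = sign ((p.map φ').eval (ψ x))

theorem SignDetermined.mono {F F' : Finset R[X]} (hF' : SignDetermined F') (h : F ⊆ F') :
    SignDetermined F := by
  obtain ⟨Q, hQ⟩ := hF'
  refine ⟨Q, fun φ φ' hφ => ?_⟩
  obtain ⟨ψ, hψ⟩ := hQ φ φ' hφ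
  exact ⟨ψ, fun p hp => hψ p (h hp)⟩

theorem eq_zero_iff_of_sign_eq {a b : ℝ} (h : sign a = sign b) : a = 0 ↔ b = 0 := by
  rw [← sign_eq_zero_iff, h, sign_eq_zero_iff]

theorem sign_eq_of_sign_pow_mul_eq {a b c d : ℝ} {k : ℕ} (ha : a ≠ 0) (hab : sign a = sign b)
    (h : sign (a ^ k * c) = sign (b ^ k * d)) : sign c = sign d := by
  rw [sign_mul, sign_mul, sign_pow, sign_pow, hab] at h
  refine mul_left_cancel₀ (pow_ne_zero k fun hb => ha ?_) h
  rwa [← hab, sign_eq_zero_iff] at hb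

theorem exists_finset_sign_coeff_eq (F : Finset R[X]) :
    ∃ Q : Finset R, ∀ φ φ' : R →+* ℝ, SignAgree Q φ φ' →
      ∀ p ∈ F, ∀ n, sign (φ (p.coeff n)) = sign (φ' (p.coeff n)) := by
  classical
  refine ⟨F.biUnion fun p => (Finset.range (p.natDegree + 1)).image p.coeff,
    fun φ φ' h p hp n => ?_⟩
  rcases le_or_gt n p.natDegree with hn | hn
  · exact h _ (Finset.mem_biUnion.2
      ⟨p, hp, Finset.mem_image_of_mem _ (Finset.mem_range.2 (Nat.lt_succ_of_le hn))⟩)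
  · simp [coeff_eq_zero_of_natDegree_lt hn]

theorem sign_eval_eq_of_remainders {φ φ' : R →+* ℝ} {p q : R[X]} {r : ℕ → R[X]} {k : ℕ → ℕ}
    (hr : ∀ (n : ℕ) (φ : R →+* ℝ), (q.map φ).natDegree ≤ n + 1 → ∀ a, (q.map φ).eval a = 0 →
      φ (q.coeff (n + 1)) ^ k n * (p.map φ).eval a = ((r n).map φ).eval a)
    (hcoeff : ∀ n, sign (φ (q.coeff n)) = sign (φ' (q.coeff n))) (hq : q.map φ ≠ 0) {a a' : ℝ}
    (ha : (q.map φ).eval a = 0) (ha' : (q.map φ').eval a' = 0)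
    (hsign : ∀ n < q.natDegree, sign (((r n).map φ).eval a) = sign (((r n).map φ').eval a')) :
    sign ((p.map φ).eval a) = sign ((p.map φ').eval a') := by
  have hdeg : (q.map φ).natDegree = (q.map φ').natDegree :=
    natDegree_map_congr fun n => eq_zero_iff_of_sign_eq (hcoeff n)
  obtain ⟨n, hn⟩ : ∃ n, (q.map φ).natDegree = n + 1 := by
    refine Nat.exists_eq_succ_of_ne_zero fun h0 => hq ?_
    rw [eq_C_of_natDegree_eq_zero h0, eval_C] at ha
    rw [eq_C_of_natDegree_eq_zero h0, ha, C_0]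
  have hlead : φ (q.coeff (n + 1)) ≠ 0 := by
    rwa [← coeff_map, ← hn, coeff_natDegree, leadingCoeff_ne_zero]
  refine sign_eq_of_sign_pow_mul_eq (k := k n) hlead (hcoeff _) ?_
  rw [hr n φ hn.le a ha, hr n φ' (hdeg ▸ hn).le a' ha']
  exact hsign n (Nat.lt_of_succ_le (hn.symm.le.trans natDegree_map_le))

theorem SignDetermined.insert_of_remainders [DecidableEq R[X]] {F : Finset R[X]} {p : R[X]} {d : ℕ}
    (hpF : derivative p ∈ F) (hd : ∀ q ∈ F, q.natDegree ≤ d)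
    (H : ∀ G : Finset R[X], (∀ r ∈ G, r.natDegree < d) → SignDetermined (F ∪ G)) :
    SignDetermined (insert p F) := by
  choose r k hrdeg hr using fun (q : R[X]) (n : ℕ) =>
    exists_pseudo_remainder (S := ℝ) p q n.succ_pos
  set G := F.biUnion fun q => (Finset.range q.natDegree).image (r q) with hG
  obtain ⟨Q₁, hQ₁⟩ := H G fun s hs => by
    simp only [hG, Finset.mem_biUnion, Finset.mem_image, Finset.mem_range] at hs
    obtain ⟨q, hq, n, hn, rfl⟩ := hs
    exact (hrdeg q n).trans_le (hn.trans_le (hd q hq))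
  obtain ⟨Q₂, hQ₂⟩ := exists_finset_sign_coeff_eq (insert p F)
  classical
  refine ⟨Q₁ ∪ Q₂, fun φ φ' h => ?_⟩
  obtain ⟨ψ, hψ⟩ := hQ₁ φ φ' (h.mono Finset.subset_union_left)
  have hcoeff := hQ₂ φ φ' (h.mono Finset.subset_union_right)
  have hψF : ∀ q ∈ F, ∀ x, sign ((q.map φ).eval x) = sign ((q.map φ').eval (ψ x)) := fun q hq =>
    hψ q (Finset.mem_union_left _ hq)
  by_cases hp : (p.map φ).derivative = 0
  · have hp' : (p.map φ').derivative = 0 := by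
      refine Polynomial.funext fun x => ?_
      rw [derivative_map, eval_zero, ← ψ.apply_symm_apply x,
        ← eq_zero_iff_of_sign_eq (hψF _ hpF _), ← derivative_map, hp, eval_zero]
    refine ⟨ψ, (Finset.forall_mem_insert _ _ _).2 ⟨fun x => ?_, hψF⟩⟩
    rw [eq_C_of_derivative_eq_zero hp, eq_C_of_derivative_eq_zero hp', eval_C, eval_C,
      coeff_map, coeff_map, hcoeff p (Finset.mem_insert_self _ _)]
  obtain ⟨ψ', hψ'F, hψ'p⟩ := exists_orderIso_insert hψF (p := p.map φ) (q := p.map φ')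
    ⟨derivative p, hpF, (derivative_map p φ).symm, (derivative_map p φ').symm⟩ hp
    fun q hq hq0 a hqa => sign_eval_eq_of_remainders (hr q)
      (hcoeff q (Finset.mem_insert_of_mem hq)) hq0 hqa
      ((eq_zero_iff_of_sign_eq (hψF q hq a)).1 hqa)
      fun n hn => hψ _ (Finset.mem_union_right _ (Finset.mem_biUnion.2
        ⟨q, hq, Finset.mem_image_of_mem _ (Finset.mem_range.2 hn)⟩)) a
  exact ⟨ψ', (Finset.forall_mem_insert _ _ _).2 ⟨hψ'p, hψ'F⟩⟩

theorem signDetermined (F : Finset R[X]) : SignDetermined F := by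
  classical
  suffices h : ∀ d, ∀ F : Finset R[X], (∀ p ∈ F, p.natDegree ≤ d) → SignDetermined F from
    h _ F fun p hp => Finset.le_sup (f := natDegree) hp
  intro d
  induction d with
  | zero =>
    intro F hF
    obtain ⟨Q, hQ⟩ := exists_finset_sign_coeff_eq F
    refine ⟨Q, fun φ φ' h => ⟨OrderIso.refl ℝ, fun p hp x => ?_⟩⟩
    rw [eq_C_of_natDegree_le_zero (hF p hp), map_C, map_C, eval_C, eval_C, hQ φ φ' h p hp]
  | succ d ihd =>
    suffices h : ∀ T : Finset R[X], (∀ p ∈ T, p.natDegree ≤ d + 1) →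
        ∀ F : Finset R[X], (∀ p ∈ F, p.natDegree ≤ d) → SignDetermined (F ∪ T) from fun T hT =>
      (h T hT ∅ (by simp)).mono Finset.subset_union_right
    intro T
    induction T using Finset.induction with
    | empty =>
      intro _ F hF
      exact (ihd F hF).mono (by simp)
    | insert p T _ ihT =>
      intro hT F hF
      obtain ⟨hp, hT⟩ := (Finset.forall_mem_insert _ _ _).1 hT
      have hp' : p.derivative.natDegree ≤ d := (natDegree_derivative_le p).trans (by omega)
      refine (SignDetermined.insert_of_remainders (F := insert p.derivative F ∪ T) (p := p)
        (d := d + 1) (by simp) ?_ fun G hG => ?_).mono fun q => by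
          simp only [Finset.mem_union, Finset.mem_insert]; tauto
      · grind
      · refine (ihT hT (insert p.derivative F ∪ G) fun q hq => ?_).mono fun q => by
          simp only [Finset.mem_union, Finset.mem_insert]; tauto
        grind

end Elimination

section Semialgebraic

variable {ι κ : Type*}

/-- `F` is given by a real polynomial in the coordinates. -/
def IsPolynomialFun (F : (ι → ℝ) → ℝ) : Prop :=
  ∃ p : MvPolynomial ι ℝ, ∀ x, F x = MvPolynomial.eval x p

namespace IsPolynomialFun

variable {F G : (ι → ℝ) → ℝ}

theorem const (c : ℝ) : IsPolynomialFun fun _ : ι → ℝ => c :=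
  ⟨MvPolynomial.C c, fun x => by simp⟩

theorem coord (i : ι) : IsPolynomialFun fun x : ι → ℝ => x i :=
  ⟨MvPolynomial.X i, fun x => by simp⟩

theorem sub (hF : IsPolynomialFun F) (hG : IsPolynomialFun G) :
    IsPolynomialFun fun x => F x - G x := by
  obtain ⟨⟨p, hp⟩, ⟨q, hq⟩⟩ := hF, hG
  exact ⟨p - q, fun x => by simp [hp, hq]⟩

theorem mul (hF : IsPolynomialFun F) (hG : IsPolynomialFun G) :
    IsPolynomialFun fun x => F x * G x := by
  obtain ⟨⟨p, hp⟩, ⟨q, hq⟩⟩ := hF, hG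
  exact ⟨p * q, fun x => by simp [hp, hq]⟩

theorem pow (hF : IsPolynomialFun F) (n : ℕ) : IsPolynomialFun fun x => F x ^ n := by
  obtain ⟨p, hp⟩ := hF
  exact ⟨p ^ n, fun x => by simp [hp]⟩

theorem sum {α : Type*} {s : Finset α} {F : α → (ι → ℝ) → ℝ}
    (hF : ∀ a ∈ s, IsPolynomialFun (F a)) : IsPolynomialFun fun x => ∑ a ∈ s, F a x := by
  choose! p hp using hF
  exact ⟨∑ a ∈ s, p a, fun x => by rw [map_sum]; exact Finset.sum_congr rfl fun a ha => hp a ha x⟩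

theorem prod {α : Type*} {s : Finset α} {F : α → (ι → ℝ) → ℝ}
    (hF : ∀ a ∈ s, IsPolynomialFun (F a)) : IsPolynomialFun fun x => ∏ a ∈ s, F a x := by
  choose! p hp using hF
  exact ⟨∏ a ∈ s, p a, fun x => by rw [map_prod]; exact Finset.prod_congr rfl fun a ha => hp a ha x⟩

theorem comp_coords {F : (κ → ℝ) → ℝ} (hF : IsPolynomialFun F) (e : κ → ι) :
    IsPolynomialFun fun x : ι → ℝ => F (x ∘ e) := by
  obtain ⟨p, hp⟩ := hF
  exact ⟨MvPolynomial.rename e p, fun x => by simp only [hp, MvPolynomial.eval_rename]⟩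

theorem contDiff [Fintype ι] {n : WithTop ℕ∞} (hF : IsPolynomialFun F) : ContDiff ℝ n F := by
  obtain ⟨p, hp⟩ := hF
  rw [funext hp]
  clear hp
  induction p using MvPolynomial.induction_on with
  | C a => simpa only [MvPolynomial.eval_C] using contDiff_const
  | add p q hp hq => simpa only [map_add] using hp.add hq
  | mul_X p i hp =>
    simpa only [map_mul, MvPolynomial.eval_X] using hp.mul (contDiff_apply ℝ ℝ i)

theorem continuous [Finite ι] (hF : IsPolynomialFun F) : Continuous F :=
  have := Fintype.ofFinite ι
  (hF.contDiff (n := 0)).continuous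

end IsPolynomialFun

/-- Membership in `S` depends only on the signs of finitely many polynomials; such an `S` is a
finite union of sets cut out by polynomial equations and strict inequalities. -/
def IsSemialgebraic (S : Set (ι → ℝ)) : Prop :=
  ∃ P : Finset (MvPolynomial ι ℝ), ∀ x y,
    SignAgree P (MvPolynomial.eval x) (MvPolynomial.eval y) → (x ∈ S ↔ y ∈ S)

theorem eval_elim' (t : ℝ) (x : ι → ℝ) (p : MvPolynomial (Option ι) ℝ) :
    MvPolynomial.eval (Option.elim' t x) p =
      ((MvPolynomial.optionEquivLeft ℝ ι p).map (MvPolynomial.eval x)).eval t := by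
  rw [← MvPolynomial.optionEquivLeft_elim_eval]
  congr 2 with o
  cases o <;> rfl

namespace IsSemialgebraic

theorem univ : IsSemialgebraic (univ : Set (ι → ℝ)) := ⟨∅, by simp⟩

theorem setOf_pos {F : (ι → ℝ) → ℝ} (hF : IsPolynomialFun F) : IsSemialgebraic {x | 0 < F x} := by
  obtain ⟨p, hp⟩ := hF
  refine ⟨{p}, fun x y h => ?_⟩
  rw [mem_ofPred_eq, mem_ofPred_eq, hp, hp, ← sign_eq_one_iff, h p (by simp), sign_eq_one_iff]

theorem setOf_not {p : (ι → ℝ) → Prop} (hp : IsSemialgebraic {x | p x}) :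
    IsSemialgebraic {x | ¬p x} := by
  obtain ⟨P, hP⟩ := hp
  exact ⟨P, fun x y h => not_congr (hP x y h)⟩

theorem setOf_and {p q : (ι → ℝ) → Prop} (hp : IsSemialgebraic {x | p x})
    (hq : IsSemialgebraic {x | q x}) : IsSemialgebraic {x | p x ∧ q x} := by
  classical
  obtain ⟨⟨P, hP⟩, ⟨Q, hQ⟩⟩ := hp, hq
  exact ⟨P ∪ Q, fun x y h => and_congr (hP x y (h.mono Finset.subset_union_left))
    (hQ x y (h.mono Finset.subset_union_right))⟩

theorem setOf_imp {p q : (ι → ℝ) → Prop} (hp : IsSemialgebraic {x | p x})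
    (hq : IsSemialgebraic {x | q x}) : IsSemialgebraic {x | p x → q x} := by
  simpa only [not_and, not_not] using (hp.setOf_and hq.setOf_not).setOf_not

theorem setOf_forall_mem {α : Type*} (s : Finset α) {p : α → (ι → ℝ) → Prop}
    (h : ∀ a, IsSemialgebraic {x | p a x}) : IsSemialgebraic {x | ∀ a ∈ s, p a x} := by
  classical
  induction s using Finset.induction_on with
  | empty => simpa using univ
  | insert a s _ ih => simpa only [Finset.forall_mem_insert] using (h a).setOf_and ih

theorem setOf_le {F G : (ι → ℝ) → ℝ} (hF : IsPolynomialFun F) (hG : IsPolynomialFun G) :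
    IsSemialgebraic {x | F x ≤ G x} := by
  simpa only [sub_pos, not_lt] using (setOf_pos (hF.sub hG)).setOf_not

theorem setOf_lt {F G : (ι → ℝ) → ℝ} (hF : IsPolynomialFun F) (hG : IsPolynomialFun G) :
    IsSemialgebraic {x | F x < G x} := by
  simpa only [sub_pos] using setOf_pos (hG.sub hF)

theorem setOf_eq {F G : (ι → ℝ) → ℝ} (hF : IsPolynomialFun F) (hG : IsPolynomialFun G) :
    IsSemialgebraic {x | F x = G x} := by
  simpa only [le_antisymm_iff] using (setOf_le hF hG).setOf_and (setOf_le hG hF)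

theorem preimage_comp {S : Set (κ → ℝ)} (hS : IsSemialgebraic S) (e : κ → ι) :
    IsSemialgebraic {x : ι → ℝ | x ∘ e ∈ S} := by
  classical
  obtain ⟨P, hP⟩ := hS
  refine ⟨P.image (MvPolynomial.rename e), fun x y h => hP _ _ fun p hp => ?_⟩
  simpa only [MvPolynomial.eval_rename] using h _ (Finset.mem_image_of_mem _ hp)

theorem setOf_exists_elim' {S : Set (Option ι → ℝ)} (hS : IsSemialgebraic S) :
    IsSemialgebraic {x : ι → ℝ | ∃ t, Option.elim' t x ∈ S} := by
  classical
  obtain ⟨P, hP⟩ := hS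
  obtain ⟨Q, hQ⟩ := signDetermined (P.image (MvPolynomial.optionEquivLeft ℝ ι))
  refine ⟨Q, fun x y h => ?_⟩
  obtain ⟨ψ, hψ⟩ := hQ _ _ h
  refine ψ.toEquiv.exists_congr fun t => hP _ _ fun p hp => ?_
  rw [eval_elim', eval_elim']
  exact hψ _ (Finset.mem_image_of_mem _ hp) t

theorem setOf_exists [Finite κ] {r : (ι → ℝ) → (κ → ℝ) → Prop}
    (h : IsSemialgebraic {z : ι ⊕ κ → ℝ | r (z ∘ Sum.inl) (z ∘ Sum.inr)}) :
    IsSemialgebraic {x | ∃ y, r x y} := by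
  induction κ using Finite.induction_empty_option generalizing ι with
  | of_equiv e ih =>
    have hr := ih (r := fun x y => r x (y ∘ e.symm)) (h.preimage_comp (Sum.map id e.symm))
    convert hr using 3 with x
    refine ⟨fun ⟨y, hy⟩ => ⟨y ∘ e, ?_⟩, fun ⟨y, hy⟩ => ⟨_, hy⟩⟩
    rwa [Function.comp_assoc, e.self_comp_symm, Function.comp_id]
  | h_empty =>
    have hr := h.preimage_comp (Sum.elim id (isEmptyElim : PEmpty → ι))
    convert hr using 3 with x
    rw [Unique.exists_iff]
    exact iff_of_eq (congrArg (r x) (Subsingleton.elim _ _))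
  | @h_option κ _ ih =>
    have hr := (h.preimage_comp (Sum.elim (some ∘ Sum.inl)
      (Option.elim' none (some ∘ Sum.inr)))).setOf_exists_elim'
    refine (congrArg IsSemialgebraic (Set.ext fun x => ?_)).mp
      (ih (r := fun x y => ∃ t, r x (Option.elim' t y)) ?_)
    · refine ⟨fun ⟨y, t, h⟩ => ⟨_, h⟩, fun ⟨y, h⟩ => ⟨y ∘ some, y none, ?_⟩⟩
      rwa [Option.elim'_none_some]
    · convert hr using 5 with z t
      exact iff_of_eq (congrArg (r (z ∘ Sum.inl)) (funext fun k => by cases k <;> rfl))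

theorem setOf_forall [Finite κ] {r : (ι → ℝ) → (κ → ℝ) → Prop}
    (h : IsSemialgebraic {z : ι ⊕ κ → ℝ | r (z ∘ Sum.inl) (z ∘ Sum.inr)}) :
    IsSemialgebraic {x | ∀ y, r x y} := by
  simpa only [not_exists, not_not] using
    (setOf_exists (r := fun x y => ¬r x y) h.setOf_not).setOf_not

theorem exists_card_le_changes {S : Set (Option ι → ℝ)} (hS : IsSemialgebraic S) :
    ∃ N : ℕ, ∀ x : ι → ℝ, ∃ Z : Finset ℝ, Z.card ≤ N ∧ ∀ s t, (∀ z ∈ Z, z ∉ uIcc s t) →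
      (Option.elim' s x ∈ S ↔ Option.elim' t x ∈ S) := by
  obtain ⟨P, hP⟩ := hS
  let f (x : ι → ℝ) (p : MvPolynomial (Option ι) ℝ) : ℝ[X] :=
    (MvPolynomial.optionEquivLeft ℝ ι p).map (MvPolynomial.eval x)
  refine ⟨∑ p ∈ P, (MvPolynomial.optionEquivLeft ℝ ι p).natDegree, fun x =>
    ⟨P.biUnion fun p => (f x p).roots.toFinset, ?_, fun s t h => hP _ _ fun p hp => ?_⟩⟩
  · exact Finset.card_biUnion_le.trans (Finset.sum_le_sum fun p _ =>
      (Multiset.toFinset_card_le _).trans ((card_roots' _).trans natDegree_map_le))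
  · rw [eval_elim', eval_elim']
    rcases eq_or_ne (f x p) 0 with h0 | h0
    · simp [f] at h0; simp [h0]
    · refine sign_eq_of_forall_uIcc_ne_zero (f x p).continuous.continuousOn fun z hz hz0 => ?_
      exact h z (Finset.mem_biUnion.2 ⟨p, hp, by simp [h0, hz0]⟩) hz

theorem eventually_nhdsGT_or {S : Set (Option ι → ℝ)} (hS : IsSemialgebraic S) (x : ι → ℝ) :
    (∀ᶠ t in 𝓝[>] (0 : ℝ), Option.elim' t x ∈ S) ∨ ∀ᶠ t in 𝓝[>] (0 : ℝ), Option.elim' t x ∉ S := by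
  obtain ⟨N, hN⟩ := hS.exists_card_le_changes
  obtain ⟨Z, -, hZ⟩ := hN x
  have havoid : ∀ᶠ t in 𝓝[>] (0 : ℝ), ∀ z ∈ Z, z ∉ Ioc 0 t := by
    refine (Filter.eventually_all_finset Z).2 fun z _ => ?_
    rcases le_or_gt z 0 with hz | hz
    · exact .of_forall fun t h => h.1.not_ge hz
    · filter_upwards [Ioo_mem_nhdsGT hz] with t ht h using h.2.not_gt ht.2
  obtain ⟨t₀, ht₀, ht₀pos⟩ := (havoid.and self_mem_nhdsWithin).exists
  have hconst : ∀ t ∈ Ioo 0 t₀, (Option.elim' t x ∈ S ↔ Option.elim' t₀ x ∈ S) := fun t ht =>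
    hZ t t₀ fun z hz hzt => ht₀ z hz
      ⟨ht.1.trans_le (uIcc_of_le ht.2.le ▸ hzt).1, (uIcc_of_le ht.2.le ▸ hzt).2⟩
  by_cases h : Option.elim' t₀ x ∈ S
  · left; filter_upwards [Ioo_mem_nhdsGT ht₀pos] with t ht using (hconst t ht).2 h
  · right; filter_upwards [Ioo_mem_nhdsGT ht₀pos] with t ht using mt (hconst t ht).1 h

end IsSemialgebraic
end Semialgebraic

section BoundedVariation

open MeasureTheory

theorem card_le_two_mul_of_forall_exists_mem_Icc {w : ℕ → ℝ} (hw : Monotone w) {K : Finset ℕ}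
    {Z : Finset ℝ} (hlt : ∀ j ∈ K, w j < w (j + 1))
    (hZ : ∀ j ∈ K, ∃ z ∈ Z, z ∈ Icc (w j) (w (j + 1))) : K.card ≤ 2 * Z.card := by
  choose! z hzZ hz using hZ
  have hne : ∀ i ∈ K, ∀ j ∈ K, i < j → z i = z j → ¬(z i = w (i + 1) ↔ z j = w (j + 1)) := by
    intro i hi j hj hij hzz h
    have hzi : z i = w (i + 1) :=
      (hz i hi).2.antisymm ((hw hij).trans (hzz ▸ (hz j hj).1))
    linarith [hlt j hj, h.1 hzi, hw (Nat.succ_le_of_lt hij)]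
  calc K.card ≤ (Z ×ˢ (Finset.univ : Finset Prop)).card := by
        refine Finset.card_le_card_of_injOn (fun j => (z j, z j = w (j + 1)))
          (fun j hj => Finset.mk_mem_product (hzZ j hj) (Finset.mem_univ _)) fun i hi j hj hij => ?_
        simp only [Prod.mk.injEq, eq_iff_iff] at hij
        rcases lt_trichotomy i j with h | h | h
        · exact absurd hij.2 (hne i hi j hj h hij.1)
        · exact h
        · exact absurd hij.2.symm (hne j hj i hi h hij.1.symm)
    _ = 2 * Z.card := by rw [Finset.card_product, Finset.card_univ, Fintype.card_prop, mul_comm]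

theorem mem_Ico_min_max_iff {α : Type*} [LinearOrder α] {a b c : α} :
    c ∈ Ico (min a b) (max a b) ↔ ¬(c < a ↔ c < b) := by
  grind

theorem edist_eq_lintegral_indicator_Ico (a b : ℝ) :
    edist a b = ∫⁻ c, (Ico (min a b) (max a b)).indicator 1 c := by
  rw [lintegral_indicator_one measurableSet_Ico, Real.volume_Ico, max_sub_min_eq_abs', edist_dist,
    Real.dist_eq]

theorem sum_indicator_Ico_le {u : ℝ → ℝ} {T : Set ℝ} {w : ℕ → ℝ} (hw : Monotone w)
    (hwT : ∀ j, w j ∈ T) {c : ℝ} {Z : Finset ℝ}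
    (hZ : ∀ s ∈ T, ∀ t ∈ T, (∀ z ∈ Z, z ∉ uIcc s t) → (c < u s ↔ c < u t)) (n : ℕ) :
    ∑ j ∈ Finset.range n, (Ico (min (u (w (j + 1))) (u (w j)))
      (max (u (w (j + 1))) (u (w j)))).indicator (1 : ℝ → ENNReal) c ≤ 2 * Z.card := by
  classical
  have hcross : ∀ j, c ∈ Ico (min (u (w (j + 1))) (u (w j))) (max (u (w (j + 1))) (u (w j))) →
      w j < w (j + 1) ∧ ∃ z ∈ Z, z ∈ Icc (w j) (w (j + 1)) := by
    intro j hj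
    rw [mem_Ico_min_max_iff] at hj
    refine ⟨(hw j.le_succ).lt_of_ne fun h => hj (by rw [h]), ?_⟩
    rw [← uIcc_of_le (hw j.le_succ)]
    by_contra! hnone
    exact hj (hZ _ (hwT j) _ (hwT (j + 1)) hnone).symm
  simp only [indicator_apply, Pi.one_apply, Finset.sum_boole]
  exact_mod_cast card_le_two_mul_of_forall_exists_mem_Icc hw
    (fun j hj => (hcross j (Finset.mem_filter.1 hj).2).1)
    (fun j hj => (hcross j (Finset.mem_filter.1 hj).2).2)

/- Layer-cake formula: the variation of `u` is the integral over `c` of the number of crossings of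
the level `c`. -/
theorem boundedVariationOn_of_card_changes_le {u : ℝ → ℝ} {T : Set ℝ} {R : ℝ}
    (hR : ∀ t ∈ T, |u t| ≤ R) {N : ℕ} (hN : ∀ c : ℝ, ∃ Z : Finset ℝ, Z.card ≤ N ∧
      ∀ s ∈ T, ∀ t ∈ T, (∀ z ∈ Z, z ∉ uIcc s t) → (c < u s ↔ c < u t)) :
    BoundedVariationOn u T := by
  suffices hbound : eVariationOn u T ≤ 2 * N * ENNReal.ofReal (R - -R) from
    ne_top_of_le_ne_top (ENNReal.mul_ne_top (ENNReal.mul_ne_top (by simp) (by simp))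
      ENNReal.ofReal_ne_top) hbound
  refine iSup_le fun ⟨n, w, hw, hwT⟩ => ?_
  set J : ℕ → Set ℝ := fun j => Ico (min (u (w (j + 1))) (u (w j))) (max (u (w (j + 1))) (u (w j)))
  have hcount : ∀ c, ∑ j ∈ Finset.range n, (J j).indicator (1 : ℝ → ENNReal) c ≤
      (Icc (-R) R).indicator (fun _ => 2 * (N : ENNReal)) c := by
    intro c
    by_cases hc : c ∈ Icc (-R) R
    · obtain ⟨Z, hZN, hZ⟩ := hN c
      rw [indicator_of_mem hc]
      refine (sum_indicator_Ico_le hw hwT hZ n).trans ?_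
      gcongr
    · rw [indicator_of_notMem hc]
      refine (Finset.sum_eq_zero fun j _ => indicator_of_notMem (fun hcJ => hc ?_) _).le
      have h₁ := abs_le.1 (hR _ (hwT (j + 1)))
      have h₂ := abs_le.1 (hR _ (hwT j))
      exact ⟨(le_min h₁.1 h₂.1).trans hcJ.1, hcJ.2.le.trans (max_le h₁.2 h₂.2)⟩
  calc ∑ j ∈ Finset.range n, edist (u (w (j + 1))) (u (w j))
      = ∫⁻ c, ∑ j ∈ Finset.range n, (J j).indicator 1 c := by
        rw [lintegral_finsetSum _ fun j _ => measurable_one.indicator measurableSet_Ico]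
        exact Finset.sum_congr rfl fun j _ => edist_eq_lintegral_indicator_Ico _ _
    _ ≤ ∫⁻ c, (Icc (-R) R).indicator (fun _ => 2 * (N : ENNReal)) c := lintegral_mono hcount
    _ = 2 * N * ENNReal.ofReal (R - -R) := by
        rw [lintegral_indicator measurableSet_Icc, setLIntegral_const, Real.volume_Icc]

theorem exists_monotone_dist_le_sub {E : Type*} [PseudoMetricSpace E] {u : ℝ → E} {T : Set ℝ}
    (hu : BoundedVariationOn u T) : ∃ V : ℝ → ℝ, Monotone V ∧
      ∀ s ∈ T, ∀ t ∈ T, s ≤ t → dist (u s) (u t) ≤ V t - V s := by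
  have hfin : ∀ t, eVariationOn u (T ∩ Iic t) ≠ ⊤ := fun t => hu.mono inter_subset_left
  refine ⟨fun t => (eVariationOn u (T ∩ Iic t)).toReal, fun s t hst => ?_,
    fun s hs t ht hst => ?_⟩
  · exact ENNReal.toReal_mono (hfin t) (eVariationOn.mono u (by gcongr))
  · have hle : eVariationOn u (T ∩ Iic s) + edist (u s) (u t) ≤ eVariationOn u (T ∩ Iic t) :=
      calc eVariationOn u (T ∩ Iic s) + edist (u s) (u t)
          ≤ eVariationOn u (T ∩ Iic s) + eVariationOn u (T ∩ Icc s t) := by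
            gcongr
            exact eVariationOn.edist_le u ⟨hs, le_rfl, hst⟩ ⟨ht, hst, le_rfl⟩
        _ ≤ eVariationOn u ((T ∩ Iic s) ∪ (T ∩ Icc s t)) :=
            eVariationOn.add_le_union u fun x hx y hy => hx.2.trans hy.2.1
        _ ≤ eVariationOn u (T ∩ Iic t) := eVariationOn.mono u (union_subset
            (inter_subset_inter_right _ (Iic_subset_Iic.2 hst))
            (inter_subset_inter_right _ fun x hx => hx.2))
    have hreal := ENNReal.toReal_mono (hfin t) hle
    rw [ENNReal.toReal_add (hfin s) (edist_ne_top _ _), edist_dist,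
      ENNReal.toReal_ofReal dist_nonneg] at hreal
    linarith

theorem exists_monotone_dist_le_sub_pi {J : Type*} [Fintype J] {E : J → Type*}
    [∀ a, PseudoMetricSpace (E a)] {X : ℝ → ∀ a, E a} {T : Set ℝ}
    (hX : ∀ a, BoundedVariationOn (fun t => X t a) T) :
    ∃ V : ℝ → ℝ, Monotone V ∧ ∀ s ∈ T, ∀ t ∈ T, s ≤ t → dist (X s) (X t) ≤ V t - V s := by
  choose V hV hdist using fun a => exists_monotone_dist_le_sub (hX a)
  refine ⟨fun t => ∑ a, V a t, fun s t hst => Finset.sum_le_sum fun a _ => hV a hst,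
    fun s hs t ht hst => ?_⟩
  have hnonneg : ∀ a ∈ Finset.univ, 0 ≤ V a t - V a s := fun a _ => sub_nonneg.2 (hV a hst)
  rw [← Finset.sum_sub_distrib, dist_pi_le_iff (Finset.sum_nonneg hnonneg)]
  exact fun a => (hdist a s hs t ht hst).trans
    (Finset.single_le_sum (f := fun a => V a t - V a s) hnonneg (Finset.mem_univ a))

end BoundedVariation

section Talweg

open MeasureTheory

variable {J : Type*} {M Z : Set (J → ℝ)} {f g h : (J → ℝ) → ℝ}

/-- `Z` is a semialgebraic subset of `M` meeting, in a compact set, each fibre of `g` that `M`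
meets. -/
structure IsFibreReduction (M : Set (J → ℝ)) (g : (J → ℝ) → ℝ) (Z : Set (J → ℝ)) : Prop where
  subset : Z ⊆ M
  isSemialgebraic : IsSemialgebraic Z
  isCompact_fibre : ∀ t, IsCompact (Z ∩ {x | g x = t})
  exists_mem : ∀ x ∈ M, ∃ y ∈ Z, g y = g x

section Minimizers

variable [Finite J]

theorem IsFibreReduction.refl (hM : IsCompact M) (hMs : IsSemialgebraic M)
    (hg : IsPolynomialFun g) : IsFibreReduction M g M :=
  ⟨subset_rfl, hMs, fun _ => hM.inter_right (isClosed_eq hg.continuous continuous_const),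
    fun x hx => ⟨x, hx, rfl⟩⟩

theorem IsFibreReduction.exists_minimizers (hZ : IsFibreReduction M g Z) (hg : IsPolynomialFun g)
    (hf : IsPolynomialFun f) :
    ∃ Z' ⊆ Z, IsFibreReduction M g Z' ∧ ∀ x ∈ Z', ∀ y ∈ Z, g y = g x → f x ≤ f y := by
  refine ⟨{x | x ∈ Z ∧ ∀ y, y ∈ Z → g y = g x → f x ≤ f y}, fun x hx => hx.1,
    ⟨fun x hx => hZ.subset hx.1, ?_, fun t => ?_, fun x hx => ?_⟩, fun x hx => hx.2⟩
  · exact hZ.isSemialgebraic.setOf_and <| IsSemialgebraic.setOf_forall (κ := J) <|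
      (hZ.isSemialgebraic.preimage_comp _).setOf_imp <|
      (IsSemialgebraic.setOf_eq (hg.comp_coords _) (hg.comp_coords _)).setOf_imp <|
      IsSemialgebraic.setOf_le (hf.comp_coords _) (hf.comp_coords _)
  · have hfibre : {x | x ∈ Z ∧ ∀ y, y ∈ Z → g y = g x → f x ≤ f y} ∩ {x | g x = t} =
        (Z ∩ {x | g x = t}) ∩ ⋂ y ∈ Z ∩ {x | g x = t}, {x | f x ≤ f y} := by
      ext x
      simp only [mem_inter_iff, mem_ofPred_eq, mem_iInter, and_imp]
      grind
    rw [hfibre]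
    exact (hZ.isCompact_fibre t).inter_right
      (isClosed_biInter fun y _ => isClosed_le hf.continuous continuous_const)
  · obtain ⟨y, hy, hyx⟩ := hZ.exists_mem x hx
    obtain ⟨w, hw, hmin⟩ := (hZ.isCompact_fibre (g x)).exists_isMinOn ⟨y, hy, hyx⟩
      hf.continuous.continuousOn
    exact ⟨w, ⟨hw.1, fun y hy hyw => hmin ⟨hy, hyw.trans hw.2⟩⟩, hw.2⟩

theorem IsFibreReduction.exists_eqOn_coords (hZ : IsFibreReduction M g Z)
    (hg : IsPolynomialFun g) (s : Finset J) :
    ∃ Z' ⊆ Z, IsFibreReduction M g Z' ∧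
      ∀ a ∈ s, ∀ x ∈ Z', ∀ y ∈ Z', g x = g y → x a = y a := by
  classical
  induction s using Finset.induction_on with
  | empty => exact ⟨Z, subset_rfl, hZ, by simp⟩
  | insert a s _ ih =>
    obtain ⟨Z₁, hZ₁Z, hZ₁, heq⟩ := ih
    obtain ⟨Z₂, hZ₂Z₁, hZ₂, hmin⟩ := hZ₁.exists_minimizers hg (.coord a)
    refine ⟨Z₂, hZ₂Z₁.trans hZ₁Z, hZ₂, (Finset.forall_mem_insert _ _ _).2 ⟨?_, ?_⟩⟩
    · exact fun x hx y hy hxy =>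
        (hmin x hx y (hZ₂Z₁ hy) hxy.symm).antisymm (hmin y hy x (hZ₂Z₁ hx) hxy)
    · exact fun b hb x hx y hy => heq b hb x (hZ₂Z₁ hx) y (hZ₂Z₁ hy)

theorem IsFibreReduction.exists_section (hZ : IsFibreReduction M g Z) (hg : IsPolynomialFun g) :
    ∃ (Z' : Set (J → ℝ)) (X : ℝ → J → ℝ), Z' ⊆ Z ∧ IsSemialgebraic Z' ∧
      ∀ t ∈ g '' M, ∀ x, x ∈ Z' ∧ g x = t ↔ x = X t := by
  cases nonempty_fintype J
  obtain ⟨Z', hZ'Z, hZ', heq⟩ := hZ.exists_eqOn_coords hg Finset.univ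
  have hex : ∀ t, ∃ x, t ∈ g '' M → x ∈ Z' ∧ g x = t := by
    intro t
    by_cases ht : t ∈ g '' M
    · obtain ⟨x, hx, rfl⟩ := ht
      obtain ⟨y, hy⟩ := hZ'.exists_mem x hx
      exact ⟨y, fun _ => hy⟩
    · exact ⟨0, fun h => absurd h ht⟩
  choose X hX using hex
  refine ⟨Z', X, hZ'Z, hZ'.isSemialgebraic, fun t ht x => ⟨fun hx => ?_, ?_⟩⟩
  · exact funext fun a =>
      heq a (Finset.mem_univ a) x hx.1 _ (hX t ht).1 (hx.2.trans (hX t ht).2.symm)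
  · rintro rfl
    exact hX t ht

end Minimizers

variable [Fintype J]

theorem boundedVariationOn_of_semialgebraic_section {T : Set ℝ} {X : ℝ → J → ℝ} {R : ℝ}
    (hZ : IsSemialgebraic Z) (hg : IsPolynomialFun g) (hR : ∀ t ∈ T, ‖X t‖ ≤ R)
    (hX : ∀ t ∈ T, ∀ x, x ∈ Z ∧ g x = t ↔ x = X t) (a : J) :
    BoundedVariationOn (fun t => X t a) T := by
  have hsup : IsSemialgebraic
      {z : Option Unit → ℝ | ∃ x : J → ℝ, (x ∈ Z ∧ g x = z none) ∧ z (some ()) < x a} :=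
    IsSemialgebraic.setOf_exists
      (r := fun z x => (x ∈ Z ∧ g x = z none) ∧ z (some ()) < x a) <|
      ((hZ.preimage_comp _).setOf_and (.setOf_eq (hg.comp_coords _) (.coord _))).setOf_and
        (.setOf_lt (.coord _) (.coord _))
  obtain ⟨N, hN⟩ := hsup.exists_card_le_changes
  refine boundedVariationOn_of_card_changes_le (N := N)
    (fun t ht => (norm_le_pi_norm (X t) a).trans (hR t ht)) fun c => ?_
  obtain ⟨W, hWN, hW⟩ := hN fun _ => c
  have hlevel : ∀ t ∈ T, (∃ x, (x ∈ Z ∧ g x = t) ∧ c < x a) ↔ c < X t a := fun t ht => by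
    simp only [hX t ht, exists_eq_left]
  refine ⟨W, hWN, fun s hs t ht hst => ?_⟩
  rw [← hlevel s hs, ← hlevel t ht]
  exact hW s t hst

theorem exists_talweg (hM : IsCompact M) (hMs : IsSemialgebraic M) (hg : IsPolynomialFun g)
    (hh : IsPolynomialFun h) :
    ∃ (X : ℝ → J → ℝ) (L : ℝ → ℝ), Monotone L ∧
      (∀ x ∈ M, X (g x) ∈ M ∧ g (X (g x)) = g x ∧ h (X (g x)) ≤ h x) ∧
      ∀ s ∈ g '' M, ∀ t ∈ g '' M, s ≤ t → dist (X s) (X t) ≤ L t - L s := by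
  obtain ⟨Z₁, hZ₁M, hZ₁, hmin⟩ := (IsFibreReduction.refl hM hMs hg).exists_minimizers hg hh
  obtain ⟨Z, X, hZZ₁, hZ, hX⟩ := hZ₁.exists_section hg
  have hXZ : ∀ t ∈ g '' M, X t ∈ Z ∧ g (X t) = t := fun t ht => (hX t ht _).2 rfl
  obtain ⟨R, hR⟩ := hM.isBounded.exists_norm_le
  obtain ⟨L, hL, hXL⟩ := exists_monotone_dist_le_sub_pi (boundedVariationOn_of_semialgebraic_section
    hZ hg (fun t ht => hR _ (hZ₁M (hZZ₁ (hXZ t ht).1))) hX)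
  refine ⟨X, L, hL, fun x hx => ?_, hXL⟩
  have hXx := hXZ (g x) (mem_image_of_mem g hx)
  exact ⟨hZ₁M (hZZ₁ hXx.1), hXx.2, hmin _ (hZZ₁ hXx.1) x hx hXx.2.symm⟩

theorem exists_monotone_sub_le_sqrt_mul_add_sq (hM : IsCompact M) (hMs : IsSemialgebraic M)
    (hg : IsPolynomialFun g) (hh : IsPolynomialFun h) {C : ℝ} (hC : 0 ≤ C)
    (hgh : ∀ x ∈ M, ∀ y ∈ M, |g x - g y| ≤ C * (√(h x) * dist x y + dist x y ^ 2)) :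
    ∃ L : ℝ → ℝ, Monotone L ∧ ∀ x ∈ M, ∀ y ∈ M, g y ≤ g x → g x - g y ≤
      C * (√(h y) * (L (g x) - L (g y)) + (L (g x) - L (g y)) ^ 2) := by
  obtain ⟨X, L, hL, hX, hXL⟩ := exists_talweg hM hMs hg hh
  refine ⟨L, hL, fun x hx y hy hyx => ?_⟩
  obtain ⟨hXx, hgx, -⟩ := hX x hx
  obtain ⟨hXy, hgy, hhy⟩ := hX y hy
  have hdist := hXL _ (mem_image_of_mem g hy) _ (mem_image_of_mem g hx) hyx
  calc g x - g y = g (X (g x)) - g (X (g y)) := by rw [hgx, hgy]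
    _ ≤ C * (√(h (X (g y))) * dist (X (g y)) (X (g x)) + dist (X (g y)) (X (g x)) ^ 2) := by
        rw [← neg_sub]
        exact (neg_le_abs _).trans (hgh _ hXy _ hXx)
    _ ≤ C * (√(h y) * (L (g x) - L (g y)) + (L (g x) - L (g y)) ^ 2) := by gcongr

theorem not_forall_sub_le_mul_sq {L : ℝ → ℝ} (hL : Monotone L) {a b : ℝ}
    (hab : a < b) (C : ℝ) : ¬∀ s ∈ Ioo a b, ∀ t ∈ Ioo a b, s ≤ t → t - s ≤ C * (L t - L s) ^ 2 := by
  intro hle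
  obtain ⟨s, hs, hdiff⟩ : ∃ s ∈ Ioo a b, DifferentiableAt ℝ L s := by
    have hvol : volume (Ioo a b) ≠ 0 := by simpa using hab
    have hfreq := frequently_ae_mem_iff.2 hvol
    exact (hfreq.and_eventually hL.ae_differentiableAt).exists
  have hL2 : (fun t => (L t - L s) ^ 2) =o[𝓝[>] s] fun t => t - s := by
    have hO := (hdiff.isBigO_sub.mono nhdsWithin_le_nhds : _ =O[𝓝[>] s] _)
    refine ((hO.pow 2).trans_isLittleO ?_)
    simpa using (Asymptotics.isLittleO_pow_sub_sub s one_lt_two).mono nhdsWithin_le_nhds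
  have ho : (fun t => t - s) =o[𝓝[>] s] fun t => t - s := by
    refine Asymptotics.IsBigO.trans_isLittleO (.of_bound |C| ?_) hL2
    filter_upwards [Ioo_mem_nhdsGT hs.2] with t ht
    have := hle s hs t ⟨hs.1.trans ht.1, ht.2⟩ ht.1.le
    rw [Real.norm_of_nonneg (sub_nonneg.2 ht.1.le), Real.norm_of_nonneg (sq_nonneg _)]
    exact this.trans (mul_le_mul_of_nonneg_right (le_abs_self C) (sq_nonneg _))
  refine Asymptotics.isLittleO_irrefl (Eventually.frequently ?_) ho
  filter_upwards [self_mem_nhdsWithin] with t ht using (sub_pos.2 ht).ne'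

/- By the germ dichotomy it suffices to exclude critical points on all levels close to `0`; along
such levels the curve estimate would bound `t - s` by a multiple of `(L t - L s) ^ 2`. -/
theorem eventually_pos_of_eq (hM : IsCompact M) (hMs : IsSemialgebraic M)
    (hg : IsPolynomialFun g) (hh : IsPolynomialFun h) {C : ℝ} (hC : 0 ≤ C)
    (hgh : ∀ x ∈ M, ∀ y ∈ M, |g x - g y| ≤ C * (√(h x) * dist x y + dist x y ^ 2)) :
    ∀ᶠ t in 𝓝[>] (0 : ℝ), ∀ x ∈ M, g x = t → 0 < h x := by
  obtain ⟨L, hL, hcurve⟩ := exists_monotone_sub_le_sqrt_mul_add_sq hM hMs hg hh hC hgh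
  have hcrit : IsSemialgebraic
      {z : Option Empty → ℝ | ∃ x : J → ℝ, (x ∈ M ∧ g x = z none) ∧ h x ≤ 0} :=
    IsSemialgebraic.setOf_exists (r := fun z x => (x ∈ M ∧ g x = z none) ∧ h x ≤ 0) <|
      ((hMs.preimage_comp _).setOf_and (.setOf_eq (hg.comp_coords _) (.coord _))).setOf_and
        (.setOf_le (hh.comp_coords _) (.const 0))
  rcases hcrit.eventually_nhdsGT_or isEmptyElim with hall | hnone
  · obtain ⟨ε, hε, hall⟩ := mem_nhdsGT_iff_exists_Ioo_subset.1 hall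
    refine (not_forall_sub_le_mul_sq hL hε C fun s hs t ht hst => ?_).elim
    obtain ⟨x, ⟨hx, hxt⟩, -⟩ := hall ht
    obtain ⟨y, ⟨hy, hys⟩, hhy⟩ := hall hs
    rw [Option.elim'_none] at hxt hys
    simpa [hxt, hys, Real.sqrt_eq_zero_of_nonpos hhy] using hcurve x hx y hy (by rwa [hxt, hys])
  · exact hnone.mono fun t ht x hx hxt => not_le.1 fun hhx => ht ⟨x, ⟨hx, hxt⟩, hhx⟩

end Talweg

section Convergence

theorem exists_desingularization {L : ℝ → ℝ} (hL : Monotone L) :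
    ∃ Φ : ℝ → ℝ, Tendsto Φ (𝓝 0) (𝓝 0) ∧ (∀ t, √t ≤ Φ t) ∧
      ∀ s > 0, ∀ t ≥ s, L t - L s ≤ Φ t - Φ s := by
  refine ⟨fun t => if t ≤ 0 then 0 else L t - Function.rightLim L 0 + √t,
    tendsto_const_nhds.if ?_, fun t => ?_, fun s hs t hst => ?_⟩
  · have hL0 : Tendsto L (𝓝[>] 0) (𝓝 (Function.rightLim L 0)) := hL.tendsto_rightLim 0
    have hsqrt : Tendsto Real.sqrt (𝓝[>] 0) (𝓝 (√0)) :=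
      Real.continuous_sqrt.continuousAt.mono_left nhdsWithin_le_nhds
    have hlim := (hL0.sub_const (Function.rightLim L 0)).add hsqrt
    rw [sub_self, Real.sqrt_zero, add_zero] at hlim
    simpa only [nhdsWithin, not_le, Ioi] using hlim
  · dsimp only
    split_ifs with ht
    · exact (Real.sqrt_eq_zero_of_nonpos ht).le
    · exact le_add_of_nonneg_left (sub_nonneg.2 (hL.rightLim_le (not_le.1 ht)))
  · dsimp only
    rw [if_neg hs.not_ge, if_neg (hs.trans_le hst).not_ge]
    linarith [Real.sqrt_le_sqrt hst]

theorem le_mul_of_mul_sq_le {c C C₁ d Δ : ℝ} (hc : 0 < c) (hC : 0 ≤ C) (hC₁ : 0 ≤ C₁)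
    (hΔ : 0 ≤ Δ) (h : c * d ^ 2 ≤ C * (C₁ * d * Δ + Δ ^ 2)) :
    d ≤ (C * (C₁ + 1) / c + 1) * Δ := by
  rcases le_or_gt d Δ with hd | hd
  · exact hd.trans (le_mul_of_one_le_left hΔ (le_add_of_nonneg_left (by positivity)))
  · have hsq : C * Δ ^ 2 ≤ C * (d * Δ) := by rw [sq]; gcongr
    have hmul : (c * d) * d ≤ (C * (C₁ + 1) * Δ) * d := by linarith
    have hcd := le_of_mul_le_mul_right hmul (hΔ.trans_lt hd)
    have hdiv : d ≤ C * (C₁ + 1) * Δ / c := (le_div_iff₀' hc).2 hcd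
    calc d ≤ C * (C₁ + 1) * Δ / c + Δ := by linarith
      _ = (C * (C₁ + 1) / c + 1) * Δ := by ring

variable {J : Type*} [Fintype J] {M : Set (J → ℝ)} {g h : (J → ℝ) → ℝ}

theorem exists_desingularization_step (hM : IsCompact M) (hMs : IsSemialgebraic M)
    (hg : IsPolynomialFun g) (hh : IsPolynomialFun h) (hg0 : ∀ x ∈ M, 0 ≤ g x)
    {C : ℝ} (hC : 0 ≤ C)
    (hgh : ∀ x ∈ M, ∀ y ∈ M, |g x - g y| ≤ C * (√(h x) * dist x y + dist x y ^ 2))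
    {c C₁ : ℝ} (hc : 0 < c) (hC₁ : 0 ≤ C₁) :
    ∃ Φ : ℝ → ℝ, Tendsto Φ (𝓝 0) (𝓝 0) ∧ (∀ t, √t ≤ Φ t) ∧ ∀ x ∈ M, ∀ y ∈ M, ∀ d,
      c * d ^ 2 ≤ g x - g y → √(h y) ≤ C₁ * d → d ≤ Φ (g x) - Φ (g y) := by
  obtain ⟨L, hL, hcurve⟩ := exists_monotone_sub_le_sqrt_mul_add_sq hM hMs hg hh hC hgh
  obtain ⟨Ψ, hΨ0, hΨsqrt, hΨL⟩ := exists_desingularization hL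
  have hΨnonneg : ∀ t, 0 ≤ Ψ t := fun t => (Real.sqrt_nonneg t).trans (hΨsqrt t)
  set K := C * (C₁ + 1) / c + 1 + 1 / √c
  have hK : 1 ≤ K :=
    (le_add_of_nonneg_left (by positivity)).trans (le_add_of_nonneg_right (by positivity))
  refine ⟨fun t => K * Ψ t, by simpa using hΨ0.const_mul K,
    fun t => (hΨsqrt t).trans (le_mul_of_one_le_left (hΨnonneg t) hK), ?_⟩
  intro x hx y hy d hdec hhy
  have hyx : g y ≤ g x := sub_nonneg.1 (le_trans (by positivity) hdec)
  rw [← mul_sub]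
  rcases (hg0 y hy).eq_or_lt' with hy0 | hy0
  · have hdx : d ≤ 1 / √c * √(g x) := by
      rw [one_div_mul_eq_div, le_div_iff₀' (Real.sqrt_pos.2 hc)]
      refine Real.le_sqrt_of_sq_le ?_
      rwa [mul_pow, Real.sq_sqrt hc.le, ← sub_zero (g x), ← hy0]
    rw [hy0, eq_of_tendsto_nhds hΨ0, sub_zero]
    refine hdx.trans (mul_le_mul (le_add_of_nonneg_left (by positivity)) (hΨsqrt _)
      (Real.sqrt_nonneg _) (by positivity))
  · have hΔ : 0 ≤ L (g x) - L (g y) := sub_nonneg.2 (hL hyx)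
    have hquad : c * d ^ 2 ≤
        C * (C₁ * d * (L (g x) - L (g y)) + (L (g x) - L (g y)) ^ 2) :=
      hdec.trans ((hcurve x hx y hy hyx).trans (by gcongr))
    refine (le_mul_of_mul_sq_le hc hC hC₁ hΔ hquad).trans ?_
    exact mul_le_mul (le_add_of_nonneg_right (by positivity)) (hΨL _ hy0 _ hyx) hΔ (by positivity)

theorem summable_dist_of_dist_le_sub {X : Type*} [PseudoMetricSpace X] {x : ℕ → X} {a : X}
    {φ : ℕ → ℝ} {ρ : ℝ} (hφ : ∀ k, 0 ≤ φ k) (hρ : dist (x 0) a + φ 0 ≤ ρ)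
    (hstep : ∀ k, dist (x k) a ≤ ρ → φ k ≤ φ 0 → dist (x k) (x (k + 1)) ≤ φ k - φ (k + 1)) :
    Summable (fun k => dist (x k) (x (k + 1))) ∧ ∀ k, φ k ≤ φ 0 := by
  have hinv : ∀ k, dist (x k) a + φ k ≤ ρ ∧ φ k ≤ φ 0 := by
    intro k
    induction k with
    | zero => exact ⟨hρ, le_rfl⟩
    | succ k ih =>
      have hk := hstep k (by linarith [hφ k, ih.1]) ih.2
      exact ⟨by linarith [dist_triangle_left (x (k + 1)) a (x k), ih.1],
        by linarith [dist_nonneg (x := x k) (y := x (k + 1)), ih.2]⟩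
  refine ⟨summable_of_sum_range_le (c := φ 0) (fun _ => dist_nonneg) fun n => ?_,
    fun k => (hinv k).2⟩
  calc ∑ k ∈ Finset.range n, dist (x k) (x (k + 1))
      ≤ ∑ k ∈ Finset.range n, (φ k - φ (k + 1)) := Finset.sum_le_sum fun k _ =>
        hstep k (by linarith [hφ k, (hinv k).1]) (hinv k).2
    _ = φ 0 - φ n := Finset.sum_range_sub' φ n
    _ ≤ φ 0 := sub_le_self _ (hφ n)

theorem eventually_exists_tendsto_of_sufficient_decrease (hM : IsCompact M)
    (hMs : IsSemialgebraic M) (hg : IsPolynomialFun g) (hh : IsPolynomialFun h)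
    (hg0 : ∀ x ∈ M, 0 ≤ g x) {C : ℝ} (hC : 0 ≤ C)
    (hgh : ∀ x ∈ M, ∀ y ∈ M, |g x - g y| ≤ C * (√(h x) * dist x y + dist x y ^ 2))
    {c C₁ ρ η : ℝ} (hc : 0 < c) (hC₁ : 0 ≤ C₁) (hρ : 0 < ρ) (hη : 0 < η) {a : J → ℝ}
    (ha : g a = 0) :
    ∀ᶠ b in 𝓝 a, ∀ x : ℕ → J → ℝ, x 0 = b → (∀ k, x k ∈ M) →
      (∀ k, dist (x k) a ≤ ρ → g (x k) ≤ η →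
        c * dist (x k) (x (k + 1)) ^ 2 ≤ g (x k) - g (x (k + 1))) →
      (∀ k, √(h (x (k + 1))) ≤ C₁ * dist (x k) (x (k + 1))) →
      ∃ z ∈ M, Tendsto x atTop (𝓝 z) ∧ g z = 0 := by
  obtain ⟨Φ, hΦ0, hΦsqrt, hΦ⟩ := exists_desingularization_step hM hMs hg hh hg0 hC hgh hc hC₁
  obtain ⟨τ, hτ : 0 < τ, hpos⟩ :=
    mem_nhdsGT_iff_exists_Ioo_subset.1 (eventually_pos_of_eq hM hMs hg hh hC hgh)
  have hΦg : Tendsto (fun b => Φ (g b)) (𝓝 a) (𝓝 0) := hΦ0.comp (ha ▸ hg.continuous.tendsto a)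
  have hdist : Tendsto (fun b => dist b a + Φ (g b)) (𝓝 a) (𝓝 0) := by
    simpa using (tendsto_iff_dist_tendsto_zero.1 (tendsto_id (α := J → ℝ) (x := 𝓝 a))).add hΦg
  filter_upwards [hdist.eventually_lt_const hρ, hΦg.eventually_lt_const (Real.sqrt_pos.2 hη),
    hΦg.eventually_lt_const (Real.sqrt_pos.2 hτ)] with b hbρ hbη hbτ x hx0 hxM hdec hgrad
  subst hx0
  obtain ⟨hsum, hmono⟩ := summable_dist_of_dist_le_sub (φ := fun k => Φ (g (x k)))
    (fun k => (Real.sqrt_nonneg _).trans (hΦsqrt _)) hbρ.le fun k hkρ hk =>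
      have hkη : g (x k) ≤ η :=
        (Real.sqrt_le_sqrt_iff hη.le).1 (((hΦsqrt _).trans hk).trans hbη.le)
      hΦ _ (hxM k) _ (hxM (k + 1)) _ (hdec k hkρ hkη) (hgrad k)
  obtain ⟨z, hz⟩ := cauchySeq_tendsto_of_complete (cauchySeq_of_summable_dist hsum)
  have hzM : z ∈ M := hM.isClosed.mem_of_tendsto hz (.of_forall hxM)
  have hgz : √(g z) < √τ :=
    (le_of_tendsto' ((hg.continuous.sqrt.tendsto z).comp hz) fun k =>
      (hΦsqrt _).trans (hmono k)).trans_lt hbτ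
  have hhz : √(h z) ≤ 0 := by
    refine le_of_tendsto_of_tendsto' ((hh.continuous.sqrt.tendsto z).comp
      ((tendsto_add_atTop_iff_nat 1).2 hz)) ?_ hgrad
    simpa using hsum.tendsto_atTop_zero.const_mul C₁
  refine ⟨z, hzM, hz, le_antisymm (not_lt.1 fun hgz0 => ?_) (hg0 z hzM)⟩
  exact (hhz.trans_lt (Real.sqrt_pos.2
    (hpos ⟨hgz0, (Real.sqrt_lt_sqrt_iff hgz0.le).1 hgz⟩ z hzM rfl))).false

end Convergence

section Frobenius

variable {m k l : Type*} [Fintype m] [Fintype k] [Fintype l]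

theorem froSq_nonneg (M : Matrix m k ℝ) : 0 ≤ froSq M :=
  Finset.sum_nonneg fun _ _ => Finset.sum_nonneg fun _ _ => sq_nonneg _

theorem fro_nonneg (M : Matrix m k ℝ) : 0 ≤ fro M := Real.sqrt_nonneg _

theorem fro_zero : fro (0 : Matrix m k ℝ) = 0 := by simp [fro, froSq]

theorem fro_sq (M : Matrix m k ℝ) : fro M ^ 2 = froSq M := Real.sq_sqrt (froSq_nonneg M)

theorem froSq_eq_trace (M : Matrix m k ℝ) : froSq M = trace (Mᵀ * M) := by
  simp [froSq, trace, mul_apply, pow_two, Finset.sum_comm (γ := m)]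

theorem froSq_transpose (M : Matrix m k ℝ) : froSq Mᵀ = froSq M :=
  Finset.sum_comm

theorem fro_transpose (M : Matrix m k ℝ) : fro Mᵀ = fro M :=
  congrArg Real.sqrt (froSq_transpose M)

theorem froSq_transpose_mul_comm (A : Matrix m k ℝ) (B : Matrix m l ℝ) :
    froSq (Aᵀ * B) = froSq (Bᵀ * A) := by
  rw [← froSq_transpose, transpose_mul, transpose_transpose]

attribute [local instance] Matrix.frobeniusNormedAddCommGroup in
theorem fro_eq_norm (M : Matrix m k ℝ) : fro M = ‖M‖ := by
  simp [frobenius_norm_def, fro, froSq, Real.sqrt_eq_rpow]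

theorem fro_mul_le (A : Matrix m k ℝ) (B : Matrix k l ℝ) : fro (A * B) ≤ fro A * fro B := by
  simpa only [fro_eq_norm] using frobenius_norm_mul A B

theorem froSq_mul_le (A : Matrix m k ℝ) (B : Matrix k l ℝ) :
    froSq (A * B) ≤ froSq A * froSq B := by
  simpa only [mul_pow, fro_sq] using pow_le_pow_left₀ (fro_nonneg _) (fro_mul_le A B) 2

theorem abs_trace_transpose_mul_le (A B : Matrix m k ℝ) : |trace (Aᵀ * B)| ≤ fro A * fro B := by
  refine abs_le_of_sq_le_sq ?_ (mul_nonneg (fro_nonneg _) (fro_nonneg _))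
  simpa only [mul_pow, fro_sq, froSq, trace, diag_apply, mul_apply, transpose_apply,
    Finset.sum_comm (γ := m), Fintype.sum_prod_type_right] using
    Finset.sum_mul_sq_le_sq_mul_sq Finset.univ (fun x : m × k => A x.1 x.2) fun x => B x.1 x.2

/-- The trace form `tr (Bᵀ S B)`: the Rayleigh quotient of `S` on the column space of `B` when `B`
has orthonormal columns. -/
def rayleigh (S : Matrix m m ℝ) (B : Matrix m k ℝ) : ℝ := trace (Bᵀ * (S * B))

theorem froSq_transpose_mul (G : Matrix m l ℝ) (B : Matrix m k ℝ) :
    froSq (Bᵀ * G) = rayleigh (G * Gᵀ) B := by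
  rw [froSq_transpose_mul_comm, froSq_eq_trace, rayleigh]
  simp only [transpose_mul, transpose_transpose, Matrix.mul_assoc]

theorem abs_rayleigh_le (S : Matrix m m ℝ) (B : Matrix m k ℝ) :
    |rayleigh S B| ≤ fro S * fro B ^ 2 :=
  calc |rayleigh S B| ≤ fro B * fro (S * B) := abs_trace_transpose_mul_le _ _
    _ ≤ fro B * (fro S * fro B) := mul_le_mul_of_nonneg_left (fro_mul_le S B) (fro_nonneg B)
    _ = fro S * fro B ^ 2 := by ring

theorem rayleigh_sub_left (S T : Matrix m m ℝ) (B : Matrix m k ℝ) :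
    rayleigh (S - T) B = rayleigh S B - rayleigh T B := by
  simp only [rayleigh, Matrix.sub_mul, Matrix.mul_sub, trace_sub]

theorem rayleigh_mul (S : Matrix m m ℝ) (B : Matrix m k ℝ) (Y : Matrix k l ℝ) :
    rayleigh S (B * Y) = rayleigh (Bᵀ * (S * B)) Y := by
  simp only [rayleigh, transpose_mul, Matrix.mul_assoc]

theorem rayleigh_add {S : Matrix m m ℝ} (hS : Sᵀ = S) (A E : Matrix m k ℝ) :
    rayleigh S (A + E) = rayleigh S A + 2 * trace (Eᵀ * (S * A)) + rayleigh S E := by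
  have hAE : trace (Aᵀ * (S * E)) = trace (Eᵀ * (S * A)) := by
    rw [← trace_transpose]
    simp only [transpose_mul, transpose_transpose, hS, Matrix.mul_assoc]
  simp only [rayleigh, transpose_add, Matrix.mul_add, Matrix.add_mul, trace_add, hAE]
  ring

theorem froSq_eq_rayleigh_one [DecidableEq m] (A : Matrix m k ℝ) : froSq A = rayleigh 1 A := by
  rw [froSq_eq_trace, rayleigh, Matrix.one_mul]

theorem trace_transpose_vecMulVec_mul (u : m → ℝ) (v : k → ℝ) (M : Matrix m k ℝ) :
    trace ((vecMulVec u v)ᵀ * M) = u ⬝ᵥ M *ᵥ v := by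
  rw [transpose_vecMulVec, vecMulVec_mul, trace_vecMulVec, dotProduct_mulVec, dotProduct_comm]

theorem rayleigh_vecMulVec (S : Matrix m m ℝ) (u : m → ℝ) (v : k → ℝ) :
    rayleigh S (vecMulVec u v) = (u ⬝ᵥ S *ᵥ u) * (v ⬝ᵥ v) := by
  rw [rayleigh, trace_transpose_vecMulVec_mul, mul_vecMulVec, vecMulVec_mulVec, dotProduct_smul,
    op_smul_eq_mul]

theorem rayleigh_smul (S : Matrix m m ℝ) (a : ℝ) (B : Matrix m k ℝ) :
    rayleigh S (a • B) = a ^ 2 * rayleigh S B := by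
  simp only [rayleigh, transpose_smul, Matrix.mul_smul, smul_mul, trace_smul, smul_eq_mul]
  ring

variable [DecidableEq k]

theorem froSq_of_transpose_mul_self {A : Matrix m k ℝ} (hA : Aᵀ * A = 1) :
    froSq A = Fintype.card k := by
  rw [froSq_eq_trace, hA, trace_one]

omit [Fintype l] in
theorem transpose_mul_sub_mul {B : Matrix m k ℝ} (hB : Bᵀ * B = 1) (A : Matrix m l ℝ) :
    Bᵀ * (A - B * (Bᵀ * A)) = 0 := by
  rw [Matrix.mul_sub, ← Matrix.mul_assoc, hB, Matrix.one_mul, sub_self]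

theorem froSq_sub_eq {A B : Matrix m k ℝ} (hA : Aᵀ * A = 1) (hB : Bᵀ * B = 1) :
    froSq (B - A) = 2 * (Fintype.card k - trace (Bᵀ * A)) := by
  have hBA : trace (Aᵀ * B) = trace (Bᵀ * A) := by
    rw [← trace_transpose, transpose_mul, transpose_transpose]
  simp only [froSq_eq_trace, transpose_sub, Matrix.sub_mul, Matrix.mul_sub, hA, hB, trace_sub,
    trace_one, hBA]
  ring

variable [DecidableEq m]

theorem rayleigh_eq_add_of_one_sub_mul_mul_eq_zero {S : Matrix m m ℝ} (hS : Sᵀ = S)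
    {B : Matrix m k ℝ} (hB : Bᵀ * B = 1) (hSB : (1 - B * Bᵀ) * (S * B) = 0) (A : Matrix m l ℝ) :
    rayleigh S A = rayleigh (Bᵀ * (S * B)) (Bᵀ * A) + rayleigh S (A - B * (Bᵀ * A)) := by
  set W := A - B * (Bᵀ * A) with hW
  have hWB : Wᵀ * B = 0 := by
    rw [← transpose_transpose B, ← transpose_mul, transpose_mul_sub_mul hB, transpose_zero]
  have hSB' : S * B = B * (Bᵀ * (S * B)) := by
    rwa [Matrix.sub_mul, Matrix.one_mul, sub_eq_zero, Matrix.mul_assoc] at hSB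
  have hcross : trace (Wᵀ * (S * (B * (Bᵀ * A)))) = 0 := by
    rw [← Matrix.mul_assoc S, hSB', Matrix.mul_assoc B, ← Matrix.mul_assoc Wᵀ, hWB,
      Matrix.zero_mul, trace_zero]
  calc rayleigh S A = rayleigh S (B * (Bᵀ * A) + W) := by rw [hW, add_sub_cancel]
    _ = rayleigh (Bᵀ * (S * B)) (Bᵀ * A) + rayleigh S W := by
      rw [rayleigh_add hS, hcross, rayleigh_mul, mul_zero, add_zero]

omit [DecidableEq m] in
theorem froSq_eq_add {B : Matrix m k ℝ} (hB : Bᵀ * B = 1) (A : Matrix m l ℝ) :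
    froSq A = froSq (Bᵀ * A) + froSq (A - B * (Bᵀ * A)) := by
  classical
  have hperp : (1 - B * Bᵀ) * ((1 : Matrix m m ℝ) * B) = 0 := by
    rw [Matrix.one_mul, Matrix.sub_mul, Matrix.one_mul, Matrix.mul_assoc, hB, Matrix.mul_one,
      sub_self]
  simpa only [froSq_eq_rayleigh_one, Matrix.one_mul, hB] using
    rayleigh_eq_add_of_one_sub_mul_mul_eq_zero transpose_one hB hperp A

omit [DecidableEq m] in
theorem froSq_transpose_mul_le {B : Matrix m k ℝ} (hB : Bᵀ * B = 1) (A : Matrix m l ℝ) :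
    froSq (Bᵀ * A) ≤ froSq A := by
  linarith [froSq_eq_add hB A, froSq_nonneg (A - B * (Bᵀ * A))]

omit [DecidableEq m] in
theorem froSq_mul_of_transpose_mul_self {B : Matrix m k ℝ} (hB : Bᵀ * B = 1) (Y : Matrix k l ℝ) :
    froSq (B * Y) = froSq Y := by
  rw [froSq_eq_trace, froSq_eq_trace, transpose_mul, Matrix.mul_assoc, ← Matrix.mul_assoc Bᵀ, hB,
    Matrix.one_mul]

omit [DecidableEq m] in
theorem froSq_sub_mul_eq {A B : Matrix m k ℝ} (hA : Aᵀ * A = 1) (hB : Bᵀ * B = 1) :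
    froSq (A - B * (Bᵀ * A)) = Fintype.card k - froSq (Bᵀ * A) := by
  linarith [froSq_eq_add hB A, froSq_of_transpose_mul_self hA]

omit [DecidableEq m] in
theorem froSq_transpose_mul_le_card {A B : Matrix m k ℝ} (hA : Aᵀ * A = 1) (hB : Bᵀ * B = 1) :
    froSq (Bᵀ * A) ≤ Fintype.card k :=
  (froSq_transpose_mul_le hB A).trans_eq (froSq_of_transpose_mul_self hA)

theorem rayleigh_sub_rayleigh {S : Matrix m m ℝ} (hS : Sᵀ = S) {A B : Matrix m k ℝ}
    (hA : Aᵀ * A = 1) (hB : Bᵀ * B = 1) :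
    rayleigh S B - rayleigh S A = 2 * trace ((B - A)ᵀ * ((1 - A * Aᵀ) * (S * A))) -
      trace ((B - A)ᵀ * ((B - A) * (Aᵀ * (S * A)))) + rayleigh S (B - A) := by
  set E := B - A with hE
  set K := Aᵀ * (S * A) with hK
  have hKs : Kᵀ = K := by simp only [hK, transpose_mul, transpose_transpose, hS, Matrix.mul_assoc]
  have hsymm : Eᵀ * A + Aᵀ * E = -(Eᵀ * E) := by
    simp only [hE, transpose_sub, Matrix.sub_mul, Matrix.mul_sub, hA, hB]
    abel
  have hcomm : trace (Aᵀ * E * K) = trace (Eᵀ * A * K) := by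
    rw [← trace_transpose, transpose_mul, transpose_mul Aᵀ E, hKs, transpose_transpose,
      trace_mul_comm]
  have hquad : 2 * trace (Eᵀ * A * K) = -trace (Eᵀ * (E * K)) := by
    rw [two_mul]
    nth_rw 2 [← hcomm]
    rw [← trace_add, ← Matrix.add_mul, hsymm, Matrix.neg_mul, trace_neg, Matrix.mul_assoc]
  have hsplit : trace (Eᵀ * (S * A)) =
      trace (Eᵀ * ((1 - A * Aᵀ) * (S * A))) + trace (Eᵀ * A * K) := by
    simp only [hK, ← trace_add, Matrix.sub_mul, Matrix.mul_sub, Matrix.one_mul, Matrix.mul_assoc,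
      sub_add_cancel]
  rw [show B = A + E by rw [hE]; abel, rayleigh_add hS, hsplit]
  linarith

theorem abs_rayleigh_sub_rayleigh_le {S : Matrix m m ℝ} (hS : Sᵀ = S) {A B : Matrix m k ℝ}
    (hA : Aᵀ * A = 1) (hB : Bᵀ * B = 1) :
    |rayleigh S B - rayleigh S A| ≤ 2 * (fro (B - A) * fro ((1 - A * Aᵀ) * (S * A))) +
      (Fintype.card k + 1) * fro S * fro (B - A) ^ 2 := by
  set E := B - A
  have hK : fro (Aᵀ * (S * A)) ≤ Fintype.card k * fro S := by
    rw [← froSq_of_transpose_mul_self hA, ← fro_sq]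
    calc fro (Aᵀ * (S * A)) ≤ fro A * (fro S * fro A) := by
          refine (fro_mul_le _ _).trans ?_
          rw [fro_transpose]
          exact mul_le_mul_of_nonneg_left (fro_mul_le _ _) (fro_nonneg _)
      _ = fro A ^ 2 * fro S := by ring
  have hEK : fro (E * (Aᵀ * (S * A))) ≤ fro E * (Fintype.card k * fro S) :=
    (fro_mul_le _ _).trans (mul_le_mul_of_nonneg_left hK (fro_nonneg _))
  have htrace := abs_le.1 ((abs_trace_transpose_mul_le E (E * (Aᵀ * (S * A)))).trans
    (mul_le_mul_of_nonneg_left hEK (fro_nonneg E)))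
  have hlin := abs_le.1 (abs_trace_transpose_mul_le E ((1 - A * Aᵀ) * (S * A)))
  have hray := abs_le.1 (abs_rayleigh_le S E)
  rw [rayleigh_sub_rayleigh hS hA hB, abs_le]
  constructor <;> linarith [htrace.1, htrace.2, hlin.1, hlin.2, hray.1, hray.2]

end Frobenius

section Householder

variable {m k : Type*} [Fintype m] [DecidableEq m]

/-- The matrix of the reflection in the hyperplane orthogonal to `u`; it is the identity for
`u = 0`. -/
noncomputable def householder (u : m → ℝ) : Matrix m m ℝ := 1 - (2 / (u ⬝ᵥ u)) • vecMulVec u u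

theorem transpose_householder (u : m → ℝ) : (householder u)ᵀ = householder u := by
  simp [householder, transpose_sub, transpose_smul, transpose_vecMulVec]

theorem householder_mul_self (u : m → ℝ) : householder u * householder u = 1 := by
  rcases eq_or_ne u 0 with rfl | hu
  · simp [householder]
  · have hu' : u ⬝ᵥ u ≠ 0 := dotProduct_self_eq_zero.not.2 hu
    simp only [householder, Matrix.sub_mul, Matrix.mul_sub, Matrix.one_mul, Matrix.mul_one,
      smul_mul_smul_comm, vecMulVec_mul_vecMulVec, smul_smul, vecMulVec_smul]
    match_scalars
    · ring
    · field_simp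
      ring

theorem transpose_householder_mul_mul (u : m → ℝ) (B : Matrix m k ℝ) :
    (householder u * B)ᵀ * (householder u * B) = Bᵀ * B := by
  rw [transpose_mul, transpose_householder, Matrix.mul_assoc, ← Matrix.mul_assoc (householder u),
    householder_mul_self, Matrix.one_mul]

theorem eq_zero_of_forall_nonneg_cubic {a b c : ℝ}
    (h : ∀ t : ℝ, 0 ≤ a * t + b * t ^ 2 + c * t ^ 3) : a = 0 := by
  have hd : HasDerivAt (fun t : ℝ => a * t + b * t ^ 2 + c * t ^ 3) a 0 := by
    simpa using (((hasDerivAt_id (0 : ℝ)).const_mul a).fun_add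
      ((hasDerivAt_pow 2 (0 : ℝ)).const_mul b)).fun_add ((hasDerivAt_pow 3 (0 : ℝ)).const_mul c)
  exact IsLocalMin.hasDerivAt_eq_zero (.of_forall fun t => by simpa using h t) hd

theorem trace_householder_mul (u : m → ℝ) (M : Matrix m m ℝ) :
    trace (householder u * M) = trace M - 2 / (u ⬝ᵥ u) * (u ⬝ᵥ M *ᵥ u) := by
  rw [householder, Matrix.sub_mul, Matrix.one_mul, trace_sub, smul_mul, trace_smul, vecMulVec_mul,
    trace_vecMulVec, dotProduct_comm u (u ᵥ* M), dotProduct_mulVec, smul_eq_mul]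

theorem dotProduct_mulVec_nonneg_of_forall_trace_mul_le {Y : Matrix m m ℝ}
    (hY : ∀ O : Matrix m m ℝ, Oᵀ * O = 1 → trace (O * Y) ≤ trace Y) (u : m → ℝ) :
    0 ≤ u ⬝ᵥ Y *ᵥ u := by
  rcases eq_or_ne u 0 with rfl | hu
  · simp
  have hu' : 0 < u ⬝ᵥ u := by simpa using dotProduct_self_star_pos_iff.2 hu
  have h := hY (householder u) (by rw [transpose_householder, householder_mul_self])
  rw [trace_householder_mul, sub_le_self_iff] at h
  exact nonneg_of_mul_nonneg_right h (by positivity)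

theorem two_mul_dotProduct_mul_le_of_forall_trace_mul_le {Y : Matrix m m ℝ}
    (hY : ∀ O : Matrix m m ℝ, Oᵀ * O = 1 → trace (O * Y) ≤ trace Y) (u v : m → ℝ) :
    2 * (u ⬝ᵥ v) * (v ⬝ᵥ Y *ᵥ u) ≤
      (v ⬝ᵥ v) * (u ⬝ᵥ Y *ᵥ u) + (u ⬝ᵥ u) * (v ⬝ᵥ Y *ᵥ v) := by
  rcases eq_or_ne u 0 with rfl | hu
  · simp
  rcases eq_or_ne v 0 with rfl | hv
  · simp
  have hu' : 0 < u ⬝ᵥ u := by simpa using dotProduct_self_star_pos_iff.2 hu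
  have hv' : 0 < v ⬝ᵥ v := by simpa using dotProduct_self_star_pos_iff.2 hv
  have h := hY (householder u * householder v) (by
    rw [transpose_householder_mul_mul, transpose_householder, householder_mul_self])
  have hvY : (householder v * Y) *ᵥ u = Y *ᵥ u - (2 / (v ⬝ᵥ v) * (v ⬝ᵥ Y *ᵥ u)) • v := by
    rw [householder, Matrix.sub_mul, Matrix.one_mul, smul_mul, sub_mulVec, smul_mulVec,
      ← mulVec_mulVec, vecMulVec_mulVec, op_smul_eq_smul, smul_smul]
  rw [Matrix.mul_assoc, trace_householder_mul, trace_householder_mul, hvY, dotProduct_sub,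
    dotProduct_smul, smul_eq_mul] at h
  have hscaled := mul_le_mul_of_nonneg_left h (mul_pos hu' hv').le
  field_simp at hscaled
  linarith

/- Optimality is tested against the products of two reflections here, and against single
reflections for nonnegativity. -/
theorem transpose_eq_of_forall_trace_mul_le {Y : Matrix m m ℝ}
    (hY : ∀ O : Matrix m m ℝ, Oᵀ * O = 1 → trace (O * Y) ≤ trace Y) : Yᵀ = Y := by
  ext i j
  set u : m → ℝ := Pi.single i 1 with hu
  set w : m → ℝ := Pi.single j 1 with hw
  have huu : u ⬝ᵥ u = 1 := by simp [hu]
  have hquad : u ⬝ᵥ Y *ᵥ w - w ⬝ᵥ Y *ᵥ u = 0 := by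
    refine eq_zero_of_forall_nonneg_cubic (b := (w ⬝ᵥ w) * (u ⬝ᵥ Y *ᵥ u) + w ⬝ᵥ Y *ᵥ w -
      2 * (u ⬝ᵥ w) * (w ⬝ᵥ Y *ᵥ u)) (c := 0) fun t => ?_
    have h := two_mul_dotProduct_mul_le_of_forall_trace_mul_le hY u (u + t • w)
    simp only [mulVec_add, mulVec_smul, dotProduct_add, add_dotProduct, smul_dotProduct,
      dotProduct_smul, smul_eq_mul, huu, dotProduct_comm w u] at h
    linarith
  simpa [hu, hw, sub_eq_zero, eq_comm] using hquad

theorem posSemidef_of_forall_trace_mul_le {Y : Matrix m m ℝ}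
    (hY : ∀ O : Matrix m m ℝ, Oᵀ * O = 1 → trace (O * Y) ≤ trace Y) : Y.PosSemidef :=
  .of_dotProduct_mulVec_nonneg (transpose_eq_of_forall_trace_mul_le hY) fun u => by
    simpa using dotProduct_mulVec_nonneg_of_forall_trace_mul_le hY u

omit [DecidableEq m] in
theorem froSq_le_trace_of_posSemidef {Y : Matrix m m ℝ} (hY : Y.PosSemidef)
    (hYY : froSq (Y * Y) ≤ froSq Y) : froSq Y ≤ trace Y := by
  classical
  have hsymm : Yᵀ = Y := hY.isHermitian
  have hcube : trace (Yᵀ * (Y * Y)) ≤ froSq Y :=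
    calc trace (Yᵀ * (Y * Y)) ≤ fro Y * fro (Y * Y) :=
          (le_abs_self _).trans (abs_trace_transpose_mul_le _ _)
      _ ≤ fro Y * fro Y := mul_le_mul_of_nonneg_left (Real.sqrt_le_sqrt hYY) (fro_nonneg _)
      _ = froSq Y := by rw [← sq, fro_sq]
  have htrace := (hY.conjTranspose_mul_mul_same (1 - Y)).trace_nonneg
  rw [conjTranspose_eq_transpose_of_trivial, transpose_sub, transpose_one, hsymm] at htrace
  rw [froSq_eq_trace, hsymm] at hcube ⊢
  simp only [Matrix.sub_mul, Matrix.mul_sub, Matrix.one_mul, Matrix.mul_one, trace_sub,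
    Matrix.mul_assoc] at htrace
  linarith

variable [Fintype k] [DecidableEq k]

omit [DecidableEq m] in
theorem froSq_sub_le_of_forall_fro_sub_le {A B : Matrix m k ℝ} (hA : Aᵀ * A = 1)
    (hB : Bᵀ * B = 1)
    (hAB : ∀ O : Matrix k k ℝ, Oᵀ * O = 1 → fro (B - A) ≤ fro (B * O - A)) :
    froSq (B - A) ≤ 2 * (Fintype.card k - froSq (Bᵀ * A)) := by
  have htrace : ∀ O : Matrix k k ℝ, Oᵀ * O = 1 → trace (O * (Bᵀ * A)) ≤ trace (Bᵀ * A) := by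
    intro O hO
    have hBO : (B * Oᵀ)ᵀ * (B * Oᵀ) = 1 := by
      rw [transpose_mul, Matrix.mul_assoc, ← Matrix.mul_assoc Bᵀ, hB, Matrix.one_mul,
        transpose_transpose, mul_eq_one_comm.1 hO]
    have h := (Real.sqrt_le_sqrt_iff (froSq_nonneg _)).1
      (hAB Oᵀ (by rw [transpose_transpose, mul_eq_one_comm.1 hO]))
    rw [froSq_sub_eq hA hB, froSq_sub_eq hA hBO, transpose_mul, transpose_transpose,
      Matrix.mul_assoc] at h
    linarith
  have hcontr : froSq (Bᵀ * A * (Bᵀ * A)) ≤ froSq (Bᵀ * A) := by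
    rw [Matrix.mul_assoc]
    exact (froSq_transpose_mul_le hB _).trans_eq (froSq_mul_of_transpose_mul_self hA _)
  have hY := froSq_le_trace_of_posSemidef (posSemidef_of_forall_trace_mul_le htrace) hcontr
  linarith [froSq_sub_eq hA hB]

omit [DecidableEq m] [DecidableEq k] in
theorem mul_dotProduct_mulVec_le_of_forall_rayleigh_le {S : Matrix m m ℝ} (hS : Sᵀ = S)
    {B : Matrix m k ℝ}
    (hB : ∀ C : Matrix m k ℝ, Cᵀ * C = Bᵀ * B → rayleigh S C ≤ rayleigh S B) (u : m → ℝ) :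
    (u ⬝ᵥ S *ᵥ u) * (u ᵥ* B ⬝ᵥ u ᵥ* B) ≤ (u ⬝ᵥ u) * (u ⬝ᵥ (S * B) *ᵥ (u ᵥ* B)) := by
  classical
  rcases eq_or_ne u 0 with rfl | hu
  · simp
  have hu' : 0 < u ⬝ᵥ u := by simpa using dotProduct_self_star_pos_iff.2 hu
  have hHB : householder u * B = B + (-(2 / (u ⬝ᵥ u))) • vecMulVec u (u ᵥ* B) := by
    rw [householder, Matrix.sub_mul, Matrix.one_mul, smul_mul, vecMulVec_mul, neg_smul,
      sub_eq_add_neg]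
  have hmax := hB _ (transpose_householder_mul_mul u B)
  rw [hHB, rayleigh_add hS, rayleigh_smul, rayleigh_vecMulVec, transpose_smul, smul_mul,
    trace_smul, trace_transpose_vecMulVec_mul, smul_eq_mul] at hmax
  have hscaled := mul_le_mul_of_nonneg_left hmax (sq_nonneg (u ⬝ᵥ u))
  field_simp at hscaled
  linarith

/- First-order variation in `t` of `B` reflected along `w + t B y`. -/
omit [DecidableEq m] in
theorem dotProduct_mulVec_eq_zero_of_forall_rayleigh_le {S : Matrix m m ℝ}
    (hS : Sᵀ = S) {B : Matrix m k ℝ} (hBB : Bᵀ * B = 1)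
    (hB : ∀ C : Matrix m k ℝ, Cᵀ * C = 1 → rayleigh S C ≤ rayleigh S B) {w : m → ℝ}
    (hw : w ᵥ* B = 0) (y : k → ℝ) : w ⬝ᵥ (S * B) *ᵥ y = 0 := by
  have hwB : w ⬝ᵥ B *ᵥ y = 0 := by rw [dotProduct_mulVec, hw, zero_dotProduct]
  have hBw : (B *ᵥ y) ⬝ᵥ w = 0 := by rw [dotProduct_comm, hwB]
  have hByB : (B *ᵥ y) ᵥ* B = y := by
    rw [← mulVec_transpose, mulVec_mulVec, hBB, one_mulVec]
  have hByBy : (B *ᵥ y) ⬝ᵥ (B *ᵥ y) = y ⬝ᵥ y := by rw [dotProduct_mulVec, hByB]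
  have hSw : (B *ᵥ y) ⬝ᵥ S *ᵥ w = w ⬝ᵥ (S * B) *ᵥ y := by
    rw [← mulVec_mulVec, dotProduct_mulVec, dotProduct_comm, ← mulVec_transpose, hS]
  have hcubic : (w ⬝ᵥ w) * (w ⬝ᵥ (S * B) *ᵥ y) = 0 := by
    refine eq_zero_of_forall_nonneg_cubic
      (b := (w ⬝ᵥ w) * ((B *ᵥ y) ⬝ᵥ (S * B) *ᵥ y) - (w ⬝ᵥ S *ᵥ w) * (y ⬝ᵥ y))
      (c := -((w ⬝ᵥ (S * B) *ᵥ y) * (y ⬝ᵥ y))) fun t => ?_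
    have hvar := mul_dotProduct_mulVec_le_of_forall_rayleigh_le hS (hBB.symm ▸ hB)
      (w + t • B *ᵥ y)
    simp only [add_vecMul, smul_vecMul, hw, hByB, zero_add, mulVec_add, mulVec_smul,
      dotProduct_add, add_dotProduct, smul_dotProduct, dotProduct_smul, smul_eq_mul, hwB, hBw,
      hByBy, hSw] at hvar
    rw [mulVec_mulVec] at hvar
    linarith
  rcases mul_eq_zero.1 hcubic with hww | h
  · rw [dotProduct_self_eq_zero.1 hww, zero_dotProduct]
  · exact h

theorem one_sub_mul_mul_eq_zero_of_forall_rayleigh_le {S : Matrix m m ℝ}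
    (hS : Sᵀ = S) {B : Matrix m k ℝ} (hBB : Bᵀ * B = 1)
    (hB : ∀ C : Matrix m k ℝ, Cᵀ * C = 1 → rayleigh S C ≤ rayleigh S B) :
    (1 - B * Bᵀ) * (S * B) = 0 := by
  refine ext_of_mulVec_single fun j => ?_
  rw [Matrix.sub_mul, Matrix.one_mul, Matrix.mul_assoc, zero_mulVec]
  obtain ⟨w, hw⟩ : ∃ w, w = (S * B - B * (Bᵀ * (S * B))) *ᵥ Pi.single j 1 := ⟨_, rfl⟩
  have hwB : w ᵥ* B = 0 := by
    rw [hw, ← mulVec_transpose, mulVec_mulVec, transpose_mul_sub_mul hBB, zero_mulVec]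
  rw [← hw, ← dotProduct_self_eq_zero]
  conv_lhs => arg 2; rw [hw]
  rw [sub_mulVec, ← mulVec_mulVec _ B, dotProduct_sub, dotProduct_mulVec _ B, hwB, zero_dotProduct,
    sub_zero, dotProduct_mulVec_eq_zero_of_forall_rayleigh_le hS hBB hB hwB]

end Householder

universe u

section SpectralGap

variable {m k l : Type u} [Fintype m] [Fintype k] [Fintype l] [DecidableEq m] [DecidableEq k]

/-- `B` has orthonormal columns spanning an invariant subspace of the symmetric matrix `S`, on which
`S` is at least `lam` and on whose orthogonal complement `S` is at most `mu`. The two bounds are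
stated for several vectors at a time, as columns of a matrix. -/
structure HasSpectralGap (S : Matrix m m ℝ) (B : Matrix m k ℝ) (lam mu : ℝ) : Prop where
  transpose_mul_self : Bᵀ * B = 1
  symm : Sᵀ = S
  invariant : (1 - B * Bᵀ) * (S * B) = 0
  le_rayleigh : ∀ {l : Type u} [Fintype l] (v : Matrix k l ℝ),
    lam * froSq v ≤ rayleigh (Bᵀ * (S * B)) v
  rayleigh_le : ∀ {l : Type u} [Fintype l] (w : Matrix m l ℝ), Bᵀ * w = 0 →
    rayleigh S w ≤ mu * froSq w

theorem HasSpectralGap.mul_sub_le {S : Matrix m m ℝ} {B : Matrix m k ℝ} {lam mu : ℝ}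
    (h : HasSpectralGap S B lam mu) {A : Matrix m k ℝ} (hA : Aᵀ * A = 1) :
    (lam - mu) * (Fintype.card k - froSq (Bᵀ * A)) ≤ rayleigh S B - rayleigh S A := by
  set K := Bᵀ * (S * B) with hK
  set Z := B - A * (Aᵀ * B) with hZ
  have hZZ : Zᵀ * Z = 1 - Bᵀ * A * (Bᵀ * A)ᵀ := by
    have hAZ : Aᵀ * Z = 0 := transpose_mul_sub_mul hA B
    have hZt : Zᵀ = Bᵀ - Bᵀ * A * Aᵀ := by
      simp only [hZ, transpose_sub, transpose_mul, transpose_transpose]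
    rw [hZt, Matrix.sub_mul, Matrix.mul_assoc, hAZ, Matrix.mul_zero, sub_zero, hZ, Matrix.mul_sub,
      h.transpose_mul_self, transpose_mul, transpose_transpose, Matrix.mul_assoc]
  have htrace : ∀ {l : Type u} [Fintype l] (Y : Matrix k l ℝ),
      rayleigh K Y = trace (K * (Y * Yᵀ)) := fun Y => by
    rw [rayleigh, trace_mul_comm, Matrix.mul_assoc]
  have hcomplement : rayleigh K Zᵀ = rayleigh S B - rayleigh K (Bᵀ * A) := by
    rw [htrace, htrace, transpose_transpose, hZZ, Matrix.mul_sub, Matrix.mul_one, trace_sub,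
      rayleigh, hK]
  have hlow := h.le_rayleigh Zᵀ
  rw [froSq_transpose, hZ, froSq_sub_mul_eq h.transpose_mul_self hA, ← hZ, ← hK,
    froSq_transpose_mul_comm, hcomplement] at hlow
  have hhigh := h.rayleigh_le _ (transpose_mul_sub_mul h.transpose_mul_self A)
  rw [froSq_sub_mul_eq hA h.transpose_mul_self] at hhigh
  have hsplit := rayleigh_eq_add_of_one_sub_mul_mul_eq_zero h.symm h.transpose_mul_self
    h.invariant A
  linarith

omit [Fintype l] [DecidableEq m] [DecidableEq k] in
theorem abs_rayleigh_sub_rayleigh_le_mul_froSq [Fintype l] {S T : Matrix m m ℝ} {ρ : ℝ}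
    (hST : fro (S - T) ≤ ρ) (B : Matrix m l ℝ) :
    |rayleigh S B - rayleigh T B| ≤ ρ * froSq B := by
  rw [← rayleigh_sub_left, ← fro_sq]
  exact (abs_rayleigh_le _ _).trans (mul_le_mul_of_nonneg_right hST (sq_nonneg _))

theorem HasSpectralGap.mul_card_sub_le {S₀ S : Matrix m m ℝ} {V B : Matrix m k ℝ} {lam mu ρ : ℝ}
    (h : HasSpectralGap S₀ V lam mu) (hS : fro (S - S₀) ≤ ρ) (hB : Bᵀ * B = 1)
    (hVB : rayleigh S V ≤ rayleigh S B) :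
    (lam - mu) * (Fintype.card k - froSq (Vᵀ * B)) ≤ 2 * Fintype.card k * ρ := by
  have hV := abs_le.1 (abs_rayleigh_sub_rayleigh_le_mul_froSq hS V)
  have hB' := abs_le.1 (abs_rayleigh_sub_rayleigh_le_mul_froSq hS B)
  rw [froSq_of_transpose_mul_self h.transpose_mul_self] at hV
  rw [froSq_of_transpose_mul_self hB] at hB'
  linarith [h.mul_sub_le hB, hV.1, hV.2, hB'.1, hB'.2]

omit [Fintype k] [DecidableEq m] [DecidableEq k] in
theorem rayleigh_nonneg {S : Matrix m m ℝ} (hS : S.PosSemidef) (B : Matrix m l ℝ) :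
    0 ≤ rayleigh S B := by
  simpa only [rayleigh, ← Matrix.mul_assoc, conjTranspose_eq_transpose_of_trivial] using
    (hS.conjTranspose_mul_mul_same B).trace_nonneg

theorem HasSpectralGap.perturb_le_rayleigh {S₀ S : Matrix m m ℝ} {V B : Matrix m k ℝ}
    {lam mu ρ : ℝ} (h : HasSpectralGap S₀ V lam mu) (hpos : S₀.PosSemidef) (hlam : 0 ≤ lam)
    (hS : fro (S - S₀) ≤ ρ) (hB : Bᵀ * B = 1) (v : Matrix k l ℝ) :
    (lam * (1 - (Fintype.card k - froSq (Vᵀ * B))) - ρ) * froSq v ≤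
      rayleigh (Bᵀ * (S * B)) v := by
  have hVB : froSq (B * v - V * (Vᵀ * (B * v))) ≤
      (Fintype.card k - froSq (Vᵀ * B)) * froSq v := by
    rw [← froSq_sub_mul_eq hB h.transpose_mul_self]
    simpa only [Matrix.sub_mul, Matrix.mul_assoc] using froSq_mul_le (B - V * (Vᵀ * B)) v
  have hdecomp := froSq_eq_add h.transpose_mul_self (B * v)
  have hrayleigh := rayleigh_eq_add_of_one_sub_mul_mul_eq_zero h.symm h.transpose_mul_self
    h.invariant (B * v)
  have hperp := rayleigh_nonneg hpos (B * v - V * (Vᵀ * (B * v)))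
  have hlow := h.le_rayleigh (Vᵀ * (B * v))
  have hdiff := (abs_le.1 (abs_rayleigh_sub_rayleigh_le_mul_froSq hS (B * v))).1
  rw [froSq_mul_of_transpose_mul_self hB] at hdecomp hdiff
  have hmul : lam * ((1 - (Fintype.card k - froSq (Vᵀ * B))) * froSq v) ≤
      lam * froSq (Vᵀ * (B * v)) := mul_le_mul_of_nonneg_left (by linarith) hlam
  rw [← rayleigh_mul]
  linarith

theorem HasSpectralGap.perturb_rayleigh_le {S₀ S : Matrix m m ℝ} {V B : Matrix m k ℝ}
    {lam mu ρ : ℝ} (h : HasSpectralGap S₀ V lam mu) (hmu : 0 ≤ mu) (hS : fro (S - S₀) ≤ ρ)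
    (hB : Bᵀ * B = 1) {w : Matrix m l ℝ} (hw : Bᵀ * w = 0) :
    rayleigh S w ≤
      (mu + fro (Vᵀ * (S₀ * V)) * (Fintype.card k - froSq (Vᵀ * B)) + ρ) * froSq w := by
  have hVw : froSq (Vᵀ * w) ≤ (Fintype.card k - froSq (Vᵀ * B)) * froSq w := by
    have hproj : Vᵀ * w = (V - B * (Bᵀ * V))ᵀ * w := by
      rw [transpose_sub, Matrix.sub_mul, transpose_mul, Matrix.mul_assoc, hw, Matrix.mul_zero,
        sub_zero]
    rw [froSq_transpose_mul_comm V B, ← froSq_sub_mul_eq h.transpose_mul_self hB, hproj,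
      ← froSq_transpose (V - B * (Bᵀ * V))]
    exact froSq_mul_le _ _
  have hrayleigh := rayleigh_eq_add_of_one_sub_mul_mul_eq_zero h.symm h.transpose_mul_self
    h.invariant w
  have hinside := (abs_le.1 (abs_rayleigh_le (Vᵀ * (S₀ * V)) (Vᵀ * w))).2
  rw [fro_sq] at hinside
  have houtside := h.rayleigh_le _ (transpose_mul_sub_mul h.transpose_mul_self w)
  have hdiff := (abs_le.1 (abs_rayleigh_sub_rayleigh_le_mul_froSq hS w)).2
  have hmul := mul_le_mul_of_nonneg_left hVw (fro_nonneg (Vᵀ * (S₀ * V)))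
  have hmu' : mu * froSq (w - V * (Vᵀ * w)) ≤ mu * froSq w :=
    mul_le_mul_of_nonneg_left
      (by linarith [froSq_eq_add h.transpose_mul_self w, froSq_nonneg (Vᵀ * w)]) hmu
  linarith

theorem HasSpectralGap.perturb {S₀ S : Matrix m m ℝ} {V B : Matrix m k ℝ} {lam mu ρ : ℝ}
    (h : HasSpectralGap S₀ V lam mu) (hpos : S₀.PosSemidef) (hlam : 0 ≤ lam) (hmu : 0 ≤ mu)
    (hSt : Sᵀ = S) (hS : fro (S - S₀) ≤ ρ) (hBB : Bᵀ * B = 1)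
    (hB : ∀ C : Matrix m k ℝ, Cᵀ * C = 1 → rayleigh S C ≤ rayleigh S B) :
    HasSpectralGap S B (lam * (1 - (Fintype.card k - froSq (Vᵀ * B))) - ρ)
      (mu + fro (Vᵀ * (S₀ * V)) * (Fintype.card k - froSq (Vᵀ * B)) + ρ) where
  transpose_mul_self := hBB
  symm := hSt
  invariant := one_sub_mul_mul_eq_zero_of_forall_rayleigh_le hSt hBB hB
  le_rayleigh v := h.perturb_le_rayleigh hpos hlam hS hBB v
  rayleigh_le _ hw := h.perturb_rayleigh_le hmu hS hBB hw

theorem HasSpectralGap.exists_forall_mul_sub_le {S₀ : Matrix m m ℝ} {V : Matrix m k ℝ}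
    {lam mu : ℝ} (h : HasSpectralGap S₀ V lam mu) (hpos : S₀.PosSemidef) (hmu : 0 ≤ mu)
    (hlt : mu < lam) :
    ∃ ρ > 0, ∃ γ > 0, ∀ S : Matrix m m ℝ, Sᵀ = S → fro (S - S₀) ≤ ρ → ∀ B : Matrix m k ℝ,
      Bᵀ * B = 1 → (∀ C : Matrix m k ℝ, Cᵀ * C = 1 → rayleigh S C ≤ rayleigh S B) →
      ∀ A : Matrix m k ℝ, Aᵀ * A = 1 →
        γ * (Fintype.card k - froSq (Bᵀ * A)) ≤ rayleigh S B - rayleigh S A := by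
  have hgap : 0 < lam - mu := sub_pos.2 hlt
  have hlam : 0 ≤ lam := hmu.trans hlt.le
  set κ := fro (Vᵀ * (S₀ * V))
  have hκ : 0 ≤ κ := fro_nonneg _
  set D := (lam + κ) * (2 * Fintype.card k / (lam - mu)) + 2 with hD
  have hD0 : 0 < D := by positivity
  refine ⟨(lam - mu) / 2 / D, by positivity, (lam - mu) / 2, by positivity, ?_⟩
  intro S hSt hS B hBB hB A hA
  set ρ := (lam - mu) / 2 / D
  set θ := (Fintype.card k : ℝ) - froSq (Vᵀ * B)
  have hθ : θ ≤ 2 * Fintype.card k / (lam - mu) * ρ := by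
    rw [div_mul_eq_mul_div, le_div_iff₀ hgap, mul_comm]
    exact h.mul_card_sub_le hS hBB (hB V h.transpose_mul_self)
  have hρD : (lam + κ) * θ + 2 * ρ ≤ (lam - mu) / 2 :=
    calc (lam + κ) * θ + 2 * ρ
        ≤ (lam + κ) * (2 * Fintype.card k / (lam - mu) * ρ) + 2 * ρ := by gcongr
      _ = ρ * D := by rw [hD]; ring
      _ = (lam - mu) / 2 := div_mul_cancel₀ _ hD0.ne'
  refine le_trans (mul_le_mul_of_nonneg_right ?_ ?_)
    ((h.perturb hpos hlam hmu hSt hS hBB hB).mul_sub_le hA)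
  · linarith
  · exact sub_nonneg.2 (froSq_transpose_mul_le_card hA hBB)

end SpectralGap

section DiagonalMatrices

variable {m l : Type*} [Fintype m] [DecidableEq m] [Fintype l]

theorem rayleigh_diagonal (d : m → ℝ) (B : Matrix m l ℝ) :
    rayleigh (diagonal d) B = ∑ i, d i * ∑ j, B i j ^ 2 := by
  rw [rayleigh, trace_mul_comm, Matrix.mul_assoc, trace]
  refine Finset.sum_congr rfl fun i _ => ?_
  rw [diag_apply, diagonal_mul, mul_apply]
  simp only [transpose_apply, sq]

theorem mul_froSq_le_rayleigh_diagonal {d : m → ℝ} {lam : ℝ} (hd : ∀ i, lam ≤ d i)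
    (B : Matrix m l ℝ) : lam * froSq B ≤ rayleigh (diagonal d) B := by
  rw [rayleigh_diagonal, froSq, Finset.mul_sum]
  gcongr with i
  exact hd i

theorem rayleigh_diagonal_le_mul_froSq {d : m → ℝ} {mu : ℝ} {B : Matrix m l ℝ}
    (hd : ∀ i, d i ≤ mu ∨ B i = 0) : rayleigh (diagonal d) B ≤ mu * froSq B := by
  rw [rayleigh_diagonal, froSq, Finset.mul_sum]
  refine Finset.sum_le_sum fun i _ => ?_
  rcases hd i with hi | hi
  · gcongr
  · simp [hi]

end DiagonalMatrices

section SingularValues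

variable {m k : Type u} [Fintype m] [DecidableEq m] [Fintype k] [DecidableEq k]

theorem transpose_eigenvectorUnitary_mul_self {S : Matrix m m ℝ} (hS : S.IsHermitian) :
    (hS.eigenvectorUnitary : Matrix m m ℝ)ᵀ * hS.eigenvectorUnitary = 1 := by
  simpa only [star_eq_conjTranspose, conjTranspose_eq_transpose_of_trivial] using
    Unitary.coe_star_mul_self hS.eigenvectorUnitary

theorem mul_eigenvectorUnitary {S : Matrix m m ℝ} (hS : S.IsHermitian) :
    S * hS.eigenvectorUnitary =
      (hS.eigenvectorUnitary : Matrix m m ℝ) * diagonal hS.eigenvalues := by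
  have h := congrArg (· * (hS.eigenvectorUnitary : Matrix m m ℝ)) hS.spectral_theorem
  simpa only [Unitary.conjStarAlgAut_apply, Matrix.mul_assoc, Unitary.coe_star_mul_self,
    Matrix.mul_one, RCLike.ofReal_real_eq_id, Function.id_comp] using h

theorem hasSpectralGap_eigenvectorUnitary {S : Matrix m m ℝ} (hS : S.IsHermitian) {ι : k → m}
    (hι : Function.Injective ι) {lam mu : ℝ} (hlam : ∀ t, lam ≤ hS.eigenvalues (ι t))
    (hmu : ∀ j ∉ range ι, hS.eigenvalues j ≤ mu) :
    HasSpectralGap S ((hS.eigenvectorUnitary : Matrix m m ℝ).submatrix id ι) lam mu := by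
  set U : Matrix m m ℝ := (hS.eigenvectorUnitary : Matrix m m ℝ)
  set V := U.submatrix id ι
  have hUU : Uᵀ * U = 1 := transpose_eigenvectorUnitary_mul_self hS
  have hVV : Vᵀ * V = 1 := by
    rw [← submatrix_one ι hι, ← hUU]
    rfl
  have hSV : S * V = V * diagonal (hS.eigenvalues ∘ ι) := by
    have h : S * V = (S * U).submatrix id ι := rfl
    rw [h, mul_eigenvectorUnitary hS]
    ext i j
    simp [U, V, Matrix.mul_diagonal]
  refine ⟨hVV, ?_, ?_, fun v => ?_, fun w hw => ?_⟩
  · simpa only [conjTranspose_eq_transpose_of_trivial] using hS.eq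
  · rw [hSV, ← Matrix.mul_assoc, Matrix.sub_mul, Matrix.one_mul, Matrix.mul_assoc V, hVV,
      Matrix.mul_one, sub_self, Matrix.zero_mul]
  · rw [hSV, ← Matrix.mul_assoc, hVV, Matrix.one_mul]
    exact mul_froSq_le_rayleigh_diagonal hlam v
  · have hw' : U * (Uᵀ * w) = w := by
      rw [← Matrix.mul_assoc, mul_eq_one_comm.1 hUU, Matrix.one_mul]
    have hdiag : rayleigh S w = rayleigh (diagonal hS.eigenvalues) (Uᵀ * w) := by
      conv_lhs => rw [← hw', rayleigh_mul, mul_eigenvectorUnitary hS, ← Matrix.mul_assoc, hUU,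
        Matrix.one_mul]
    have hsq : froSq w = froSq (Uᵀ * w) := by
      rw [← froSq_mul_of_transpose_mul_self hUU (Uᵀ * w), hw']
    rw [hdiag, hsq]
    refine rayleigh_diagonal_le_mul_froSq fun j => ?_
    by_cases hj : j ∈ range ι
    · obtain ⟨t, rfl⟩ := hj
      exact .inr (congrFun hw t)
    · exact .inl (hmu j hj)

theorem exists_perm_antitone_reverse_sort_eq_ofFn {α : Type*} [LinearOrder α] {n : ℕ}
    (e : Fin n → α) :
    ∃ σ : Equiv.Perm (Fin n), Antitone (e ∘ σ) ∧
      (((Finset.univ : Finset (Fin n)).val.map e).sort (· ≤ ·)).reverse = List.ofFn (e ∘ σ) := by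
  let σ := Tuple.sort (OrderDual.toDual ∘ e)
  have hσ : Antitone (e ∘ σ) := Tuple.monotone_sort (OrderDual.toDual ∘ e)
  refine ⟨σ, hσ, List.Perm.eq_of_pairwise (le := fun a b => b ≤ a) ?_ ?_ ?_ ?_⟩
  · exact fun a b _ _ hba hab => le_antisymm hab hba
  · exact List.pairwise_reverse.2 (Multiset.pairwise_sort _ _)
  · exact List.pairwise_ofFn.2 fun i j hij => hσ hij.le
  · refine (List.reverse_perm _).trans (.trans ?_ (Equiv.Perm.ofFn_comp_perm σ e).symm)
    rw [← Multiset.coe_eq_coe, Multiset.sort_eq, Fin.univ_val_map]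

theorem exists_hasSpectralGap_of_getD_lt {n r : ℕ} {S : Matrix (Fin n) (Fin n) ℝ}
    (hS : S.IsHermitian) (σ : Equiv.Perm (Fin n)) (hσ : Antitone (hS.eigenvalues ∘ σ))
    (hr : 0 < r) (hrn : r ≤ n) {lam mu : ℝ}
    (hlam : lam ≤ (List.ofFn (hS.eigenvalues ∘ σ)).getD (r - 1) 0)
    (hmu : (List.ofFn (hS.eigenvalues ∘ σ)).getD r 0 ≤ mu) :
    ∃ V : Matrix (Fin n) (Fin r) ℝ, HasSpectralGap S V lam mu := by
  refine ⟨_, hasSpectralGap_eigenvectorUnitary hS (ι := σ ∘ Fin.castLE hrn)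
    (σ.injective.comp (Fin.castLE_injective hrn)) (fun t => ?_) fun j hj => ?_⟩
  · rw [List.getD_eq_getElem _ _ (by rw [List.length_ofFn]; omega), List.getElem_ofFn] at hlam
    exact hlam.trans (hσ (Fin.le_def.2 (Nat.le_sub_one_of_lt t.isLt)))
  · have hrj : r ≤ (σ.symm j).val := by
      by_contra! hlt
      exact hj ⟨⟨_, hlt⟩, σ.apply_symm_apply j⟩
    have hrn' : r < n := hrj.trans_lt (σ.symm j).isLt
    rw [List.getD_eq_getElem _ _ (by rwa [List.length_ofFn]), List.getElem_ofFn] at hmu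
    simpa using (hσ (show (⟨r, hrn'⟩ : Fin n) ≤ σ.symm j from hrj)).trans hmu

theorem exists_hasSpectralGap_of_sval_lt {n r : ℕ} {κ : Type*} [Fintype κ]
    (G : Matrix (Fin n) κ ℝ) (hrn : r ≤ n) (hgap : sval G (r + 1) < sval G r) :
    ∃ (V : Matrix (Fin n) (Fin r) ℝ) (lam mu : ℝ),
      0 ≤ mu ∧ mu < lam ∧ HasSpectralGap (G * Gᵀ) V lam mu := by
  have hS := isHermitian_mul_conjTranspose_self G
  obtain ⟨σ, hσ, hlist⟩ := exists_perm_antitone_reverse_sort_eq_ofFn hS.eigenvalues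
  have hr : 0 < r := Nat.pos_of_ne_zero fun h => by simp [h, sval] at hgap
  rw [sval, sval, eigList, hlist, Nat.add_sub_cancel] at hgap
  have hlam := Real.sqrt_pos.1 ((Real.sqrt_nonneg _).trans_lt hgap)
  obtain ⟨V, hV⟩ := exists_hasSpectralGap_of_getD_lt hS σ hσ hr hrn le_rfl (le_max_right 0 _)
  refine ⟨V, _, _, le_max_left _ _, max_lt hlam ((Real.sqrt_lt_sqrt_iff_of_pos hlam).1 hgap), ?_⟩
  simpa only [conjTranspose_eq_transpose_of_trivial] using hV

/-- One block update of greedy HOOI: `B` maximizes `rayleigh S` among the matrices with orthonormal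
columns, and is a maximizer closest to `A`. -/
structure IsGreedyUpdate (S : Matrix m m ℝ) (A B : Matrix m k ℝ) : Prop where
  transpose_mul_self : Bᵀ * B = 1
  rayleigh_le : ∀ C : Matrix m k ℝ, Cᵀ * C = 1 → rayleigh S C ≤ rayleigh S B
  fro_sub_le : ∀ C : Matrix m k ℝ, Cᵀ * C = 1 → rayleigh S C = rayleigh S B →
    fro (B - A) ≤ fro (C - A)

omit [DecidableEq m] in
theorem IsGreedyUpdate.fro_sub_le_fro_mul_sub {S : Matrix m m ℝ} {A B : Matrix m k ℝ}
    (h : IsGreedyUpdate S A B) {O : Matrix k k ℝ} (hO : Oᵀ * O = 1) :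
    fro (B - A) ≤ fro (B * O - A) := by
  refine h.fro_sub_le _ ?_ ?_
  · rw [transpose_mul, Matrix.mul_assoc, ← Matrix.mul_assoc Bᵀ, h.transpose_mul_self,
      Matrix.one_mul, hO]
  · rw [rayleigh_mul, rayleigh, trace_mul_comm, Matrix.mul_assoc, mul_eq_one_comm.1 hO,
      Matrix.mul_one, rayleigh]

theorem HasSpectralGap.exists_forall_mul_froSq_le {S₀ : Matrix m m ℝ} {V : Matrix m k ℝ}
    {lam mu : ℝ} (h : HasSpectralGap S₀ V lam mu) (hpos : S₀.PosSemidef) (hmu : 0 ≤ mu)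
    (hlt : mu < lam) :
    ∃ ρ > 0, ∃ c > 0, ∀ S : Matrix m m ℝ, Sᵀ = S → fro (S - S₀) ≤ ρ →
      ∀ A B : Matrix m k ℝ, Aᵀ * A = 1 → IsGreedyUpdate S A B →
        c * froSq (B - A) ≤ rayleigh S B - rayleigh S A := by
  obtain ⟨ρ, hρ, γ, hγ, hgap⟩ := h.exists_forall_mul_sub_le hpos hmu hlt
  refine ⟨ρ, hρ, γ / 2, half_pos hγ, fun S hSt hS A B hA hAB => ?_⟩
  calc γ / 2 * froSq (B - A)
      ≤ γ / 2 * (2 * (Fintype.card k - froSq (Bᵀ * A))) := by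
        gcongr
        exact froSq_sub_le_of_forall_fro_sub_le hA hAB.transpose_mul_self fun O hO =>
          hAB.fro_sub_le_fro_mul_sub hO
    _ = γ * (Fintype.card k - froSq (Bᵀ * A)) := by ring
    _ ≤ rayleigh S B - rayleigh S A :=
        hgap S hSt hS B hAB.transpose_mul_self hAB.rayleigh_le A hA

end SingularValues

section Estimates

variable {m k l : Type*} [Fintype m] [Fintype k]

theorem fro_le_sum_abs (M : Matrix m k ℝ) : fro M ≤ ∑ i, ∑ j, |M i j| := by
  rw [fro, froSq, ← Fintype.sum_prod_type', ← Fintype.sum_prod_type']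
  refine Real.sqrt_le_iff.2 ⟨Finset.sum_nonneg fun _ _ => abs_nonneg _, ?_⟩
  simpa only [sq_abs] using Finset.sum_sq_le_sq_sum_of_nonneg (s := Finset.univ)
    (f := fun p : m × k => |M p.1 p.2|) fun _ _ => abs_nonneg _

theorem abs_le_fro (M : Matrix m k ℝ) (i : m) (j : k) : |M i j| ≤ fro M := by
  refine Real.abs_le_sqrt ?_
  rw [froSq, ← Fintype.sum_prod_type']
  exact Finset.single_le_sum (f := fun p : m × k => M p.1 p.2 ^ 2) (fun _ _ => sq_nonneg _)
    (Finset.mem_univ (i, j))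

theorem continuous_fro : Continuous (fro : Matrix m k ℝ → ℝ) := by
  unfold fro froSq
  fun_prop

theorem fro_of_transpose_mul_self [DecidableEq k] {A : Matrix m k ℝ} (hA : Aᵀ * A = 1) :
    fro A = √(Fintype.card k) := by
  rw [fro, froSq_of_transpose_mul_self hA]

theorem fro_one_sub_mul_transpose_mul_le [Fintype l] [DecidableEq m] [DecidableEq k]
    {B : Matrix m k ℝ} (hB : Bᵀ * B = 1) (A : Matrix m l ℝ) :
    fro ((1 - B * Bᵀ) * A) ≤ fro A := by
  rw [Matrix.sub_mul, Matrix.one_mul, Matrix.mul_assoc]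
  exact Real.sqrt_le_sqrt (by linarith [froSq_eq_add hB A, froSq_nonneg (Bᵀ * A)])

attribute [local instance] Matrix.frobeniusNormedAddCommGroup in
theorem fro_one_sub_mul_transpose_mul_mul_le [DecidableEq m] [DecidableEq k]
    {B : Matrix m k ℝ} (hB : Bᵀ * B = 1) (S T : Matrix m m ℝ) :
    fro ((1 - B * Bᵀ) * (S * B)) ≤
      fro ((1 - B * Bᵀ) * (T * B)) + fro (S - T) * √(Fintype.card k) := by
  have hsplit : (1 - B * Bᵀ) * (S * B) =
      (1 - B * Bᵀ) * (T * B) + (1 - B * Bᵀ) * ((S - T) * B) := by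
    rw [← Matrix.mul_add, ← Matrix.add_mul, add_sub_cancel]
  calc fro ((1 - B * Bᵀ) * (S * B))
      ≤ fro ((1 - B * Bᵀ) * (T * B)) + fro ((1 - B * Bᵀ) * ((S - T) * B)) := by
        rw [hsplit]
        simpa only [fro_eq_norm] using norm_add_le _ _
    _ ≤ fro ((1 - B * Bᵀ) * (T * B)) + fro (S - T) * √(Fintype.card k) := by
        rw [← fro_of_transpose_mul_self hB]
        gcongr
        exact (fro_one_sub_mul_transpose_mul_le hB _).trans (fro_mul_le _ _)

variable {J : Type*} [Fintype J]

theorem IsPolynomialFun.exists_abs_sub_le_mul_dist {F : (J → ℝ) → ℝ} (hF : IsPolynomialFun F)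
    {M : Set (J → ℝ)} (hM : IsCompact M) :
    ∃ L, 0 ≤ L ∧ ∀ x ∈ M, ∀ y ∈ M, |F x - F y| ≤ L * dist x y := by
  obtain ⟨L, hL⟩ := LocallyLipschitzOn.exists_lipschitzOnWith_of_compact hM
    (hF.contDiff.locallyLipschitz.locallyLipschitzOn)
  exact ⟨L, L.2, fun x hx y hy => hL.dist_le_mul x hx y hy⟩

theorem exists_fro_sub_le_mul_dist {P : (J → ℝ) → Matrix m k ℝ}
    (hP : ∀ i j, IsPolynomialFun fun x => P x i j) {M : Set (J → ℝ)} (hM : IsCompact M) :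
    ∃ L, 0 ≤ L ∧ ∀ x ∈ M, ∀ y ∈ M, fro (P x - P y) ≤ L * dist x y := by
  choose L hL0 hL using fun i j => (hP i j).exists_abs_sub_le_mul_dist hM
  refine ⟨∑ i, ∑ j, L i j, Finset.sum_nonneg fun i _ => Finset.sum_nonneg fun j _ => hL0 i j,
    fun x hx y hy => (fro_le_sum_abs _).trans ?_⟩
  simp only [Finset.sum_mul]
  gcongr with i _ j _
  exact hL i j x hx y hy

omit [Fintype m] in
theorem isPolynomialFun_matrix_mul {ι : Type*} {P : (ι → ℝ) → Matrix l k ℝ}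
    {Q : (ι → ℝ) → Matrix k m ℝ} (hP : ∀ i j, IsPolynomialFun fun x => P x i j)
    (hQ : ∀ i j, IsPolynomialFun fun x => Q x i j) (i : l) (j : m) :
    IsPolynomialFun fun x => (P x * Q x) i j := by
  simp only [Matrix.mul_apply]
  exact .sum fun c _ => (hP i c).mul (hQ c j)

end Estimates

section Coordinates

variable {N : ℕ} {I r : Fin N → ℕ}

/-- The tuples `A = (A₁, …, A_N)` of factor matrices, orthonormal or not. -/
abbrev Factors (I r : Fin N → ℕ) : Type := (n : Fin N) → Matrix (Fin (I n)) (Fin (r n)) ℝ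

/-- The index type of all the entries of a tuple of factor matrices. -/
abbrev Entry (I r : Fin N → ℕ) : Type := Σ n : Fin N, Fin (I n) × Fin (r n)

/-- A tuple of factor matrices as a single vector, whose distances are measured in the sup norm. -/
def flatten (A : Factors I r) : Entry I r → ℝ := fun e => A e.1 e.2.1 e.2.2

/-- The inverse of `flatten`. -/
def unflatten (x : Entry I r → ℝ) : Factors I r := fun n i t => x ⟨n, i, t⟩

/-- The feasible set, as a set of vectors. -/
def feasibleSet (I r : Fin N → ℕ) : Set (Entry I r → ℝ) := {x | TFeas (unflatten x)}

@[simp]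
theorem unflatten_flatten (A : Factors I r) : unflatten (flatten A) = A := rfl

@[simp]
theorem flatten_unflatten (x : Entry I r → ℝ) : flatten (unflatten x) = x :=
  funext fun _ => rfl

theorem isPolynomialFun_unflatten (n : Fin N) (i : Fin (I n)) (t : Fin (r n)) :
    IsPolynomialFun fun x : Entry I r → ℝ => unflatten x n i t := .coord _

theorem continuous_unflatten (n : Fin N) :
    Continuous fun x : Entry I r → ℝ => unflatten x n :=
  continuous_matrix fun _ _ => continuous_apply _

theorem isSemialgebraic_feasibleSet : IsSemialgebraic (feasibleSet I r) := by
  have h := IsSemialgebraic.setOf_forall_mem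
    (Finset.univ : Finset (Σ n : Fin N, Fin (r n) × Fin (r n)))
    (p := fun e x => ((unflatten (I := I) x e.1)ᵀ * unflatten x e.1) e.2.1 e.2.2 =
      (1 : Matrix (Fin (r e.1)) (Fin (r e.1)) ℝ) e.2.1 e.2.2)
    fun e => .setOf_eq (isPolynomialFun_matrix_mul (fun i j => isPolynomialFun_unflatten e.1 j i)
      (isPolynomialFun_unflatten e.1) _ _) (.const _)
  simpa only [feasibleSet, TFeas, ← Matrix.ext_iff, Finset.mem_univ, true_implies, Sigma.forall,
    Prod.forall] using h

theorem abs_le_one_of_transpose_mul_self {m k : Type*} [Fintype m] [DecidableEq k]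
    {A : Matrix m k ℝ} (hA : Aᵀ * A = 1) (i : m) (j : k) : |A i j| ≤ 1 := by
  have h := congrFun (congrFun hA j) j
  rw [one_apply_eq, mul_apply] at h
  rw [abs_le_one_iff_mul_self_le_one, ← h]
  exact Finset.single_le_sum (f := fun i => Aᵀ j i * A i j) (fun _ _ => mul_self_nonneg _)
    (Finset.mem_univ i)

theorem isCompact_feasibleSet : IsCompact (feasibleSet I r) := by
  refine (isCompact_closedBall (0 : Entry I r → ℝ) 1).of_isClosed_subset ?_ fun x hx => ?_
  · simp only [feasibleSet, TFeas, ofPred_forall]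
    exact isClosed_iInter fun n => isClosed_eq
      ((continuous_unflatten n).matrix_transpose.matrix_mul (continuous_unflatten n))
      continuous_const
  · rw [mem_closedBall_zero_iff, pi_norm_le_iff_of_nonneg zero_le_one]
    exact fun e => abs_le_one_of_transpose_mul_self (hx e.1) e.2.1 e.2.2

theorem dist_flatten_le {A B : Factors I r} {b : ℝ} (hb : 0 ≤ b) (h : ∀ n, fro (A n - B n) ≤ b) :
    dist (flatten A) (flatten B) ≤ b :=
  (dist_pi_le_iff hb).2 fun e => (abs_le_fro (A e.1 - B e.1) e.2.1 e.2.2).trans (h e.1)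

theorem dist_flatten_le_tdist (A B : Factors I r) : dist (flatten A) (flatten B) ≤ tdist A B :=
  dist_flatten_le (Real.sqrt_nonneg _) fun n => Real.sqrt_le_sqrt <|
    Finset.single_le_sum (f := fun n => froSq (A n - B n)) (fun _ _ => froSq_nonneg _)
      (Finset.mem_univ n)

theorem sq_dist_flatten_le (A B : Factors I r) :
    dist (flatten A) (flatten B) ^ 2 ≤ ∑ n, froSq (A n - B n) := by
  have h := pow_le_pow_left₀ dist_nonneg (dist_flatten_le_tdist A B) 2
  rwa [tdist, Real.sq_sqrt (Finset.sum_nonneg fun _ _ => froSq_nonneg _)] at h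

theorem tendsto_fro_sub {A : ℕ → Factors I r} {x : Entry I r → ℝ}
    (h : Tendsto (fun k => flatten (A k)) atTop (𝓝 x)) (n : Fin N) :
    Tendsto (fun k => fro (A k n - unflatten x n)) atTop (𝓝 0) := by
  have hcont : Continuous fun y : Entry I r → ℝ => fro (unflatten y n - unflatten x n) :=
    continuous_fro.comp ((continuous_unflatten n).sub continuous_const)
  simpa only [Function.comp_def, sub_self, fro_zero, unflatten_flatten] using
    (hcont.tendsto x).comp h

end Coordinates

section BlockGram

variable {N : ℕ} {I r : Fin N → ℕ} (X : ((n : Fin N) → Fin (I n)) → ℝ)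

theorem Gmat_congr {A B : Factors I r} {n : Fin N} (h : ∀ i, i ≠ n → A i = B i) :
    Gmat X A n = Gmat X B n := by
  ext j c
  simp only [Gmat]
  refine Finset.sum_congr rfl fun idx _ => ?_
  congr 1
  exact Finset.prod_congr rfl fun m _ => by rw [h m.1 m.2]

theorem fval_eq_froSq (A : Factors I r) (n : Fin N) :
    fval X A = froSq ((A n)ᵀ * Gmat X A n) := by
  rw [fval, froSq, ← Fintype.sum_prod_type']
  refine Fintype.sum_equiv (Equiv.piSplitAt n fun n => Fin (r n)) _ _ fun c => ?_
  simp only [Matrix.mul_apply, Gmat, Finset.mul_sum]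
  rw [← Fintype.sum_prod_type']
  congr 1
  refine Fintype.sum_equiv (Equiv.piSplitAt n fun n => Fin (I n)) _ _ fun idx => ?_
  have hglue : (fun i => if h : i = n then
      Fin.cast (by rw [h]) ((Equiv.piSplitAt n fun n => Fin (I n)) idx).1
      else ((Equiv.piSplitAt n fun n => Fin (I n)) idx).2 ⟨i, h⟩ : (i : Fin N) → Fin (I i)) =
      idx := by
    funext i
    by_cases h : i = n
    · subst h
      simp [Equiv.piSplitAt]
    · simp [h, Equiv.piSplitAt]
  rw [hglue, Fintype.prod_eq_mul_prod_subtype_ne _ n]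
  simp only [Equiv.piSplitAt, Equiv.coe_fn_mk, transpose_apply]
  ring

/-- The Gram matrix `Gₙ(A)Gₙ(A)ᵀ`, whose leading eigenspaces are what an update of block `n`
looks for. -/
noncomputable def blockGram (A : Factors I r) (n : Fin N) : Matrix (Fin (I n)) (Fin (I n)) ℝ :=
  Gmat X A n * (Gmat X A n)ᵀ

theorem transpose_blockGram (A : Factors I r) (n : Fin N) :
    (blockGram X A n)ᵀ = blockGram X A n := by
  rw [blockGram, transpose_mul, transpose_transpose]

theorem posSemidef_blockGram (A : Factors I r) (n : Fin N) : (blockGram X A n).PosSemidef := by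
  simpa only [blockGram, conjTranspose_eq_transpose_of_trivial] using
    posSemidef_self_mul_conjTranspose (Gmat X A n)

theorem fval_eq_rayleigh (A : Factors I r) (n : Fin N) :
    fval X A = rayleigh (blockGram X A n) (A n) := by
  rw [fval_eq_froSq X A n, froSq_transpose_mul, blockGram]

/-- The gain of `f` at the update of block `n`, in a sweep that turns `A` into `B`. -/
noncomputable def blockGain (A B : Factors I r) (n : Fin N) : ℝ :=
  rayleigh (blockGram X (hyb A B n) n) (B n) - rayleigh (blockGram X (hyb A B n) n) (A n)

theorem sum_blockGain (A B : Factors I r) :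
    ∑ n, blockGain X A B n = fval X B - fval X A := by
  let H : ℕ → Factors I r := fun k i => if i.val < k then B i else A i
  have hstep (n : Fin N) : blockGain X A B n = fval X (H (n + 1)) - fval X (H n) := by
    have hgram : blockGram X (H (n + 1)) n = blockGram X (hyb A B n) n := by
      rw [blockGram, blockGram, Gmat_congr X fun i hi => ?_]
      have hne : i.val ≠ n.val := fun h => hi (Fin.ext h)
      simp only [H, hyb, Fin.lt_def, Nat.lt_succ_iff_lt_or_eq, hne, or_false]
    have hnew : H (n + 1) n = B n := if_pos (Nat.lt_succ_self _)
    have hold : H n n = A n := if_neg (lt_irrefl _)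
    rw [fval_eq_rayleigh X (H (n + 1)) n, fval_eq_rayleigh X (H n) n, hgram, hnew, hold]
    rfl
  have hfirst : H 0 = A := by simp [H]
  have hlast : H N = B := by simp [H]
  rw [Finset.sum_congr rfl fun n _ => hstep n,
    Fin.sum_univ_eq_sum_range fun k => fval X (H (k + 1)) - fval X (H k),
    Finset.sum_range_sub fun k => fval X (H k), hfirst, hlast]

/-- The first-order optimality residual of block `n`: the component of `Gₙ(A)Gₙ(A)ᵀAₙ` orthogonal
to the range of `Aₙ`. -/
noncomputable def blockResidual (A : Factors I r) (n : Fin N) : Matrix (Fin (I n)) (Fin (r n)) ℝ :=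
  (1 - A n * (A n)ᵀ) * (blockGram X A n * A n)

/-- The squared norm of the first-order optimality residual, which vanishes at critical points. -/
noncomputable def residualSq (A : Factors I r) : ℝ := ∑ n, froSq (blockResidual X A n)

theorem fro_blockResidual_le (A : Factors I r) (n : Fin N) :
    fro (blockResidual X A n) ≤ √(residualSq X A) :=
  Real.sqrt_le_sqrt <| Finset.single_le_sum (f := fun n => froSq (blockResidual X A n))
    (fun _ _ => froSq_nonneg _) (Finset.mem_univ n)

theorem sqrt_residualSq_le_sum (A : Factors I r) :
    √(residualSq X A) ≤ ∑ n, fro (blockResidual X A n) := by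
  refine Real.sqrt_le_iff.2 ⟨Finset.sum_nonneg fun _ _ => fro_nonneg _, ?_⟩
  simp only [residualSq, ← fro_sq]
  exact Finset.sum_sq_le_sq_sum_of_nonneg fun _ _ => fro_nonneg _

theorem isPolynomialFun_Gmat (n : Fin N) (i : Fin (I n))
    (c : (m : {m : Fin N // m ≠ n}) → Fin (r m.1)) :
    IsPolynomialFun fun x => Gmat X (unflatten (r := r) x) n i c :=
  .sum fun _ _ => (IsPolynomialFun.const _).mul <| .prod fun _ _ => isPolynomialFun_unflatten _ _ _

theorem isPolynomialFun_blockGram (n : Fin N) (i j : Fin (I n)) :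
    IsPolynomialFun fun x => blockGram X (unflatten (r := r) x) n i j :=
  isPolynomialFun_matrix_mul (isPolynomialFun_Gmat X n)
    (fun c j => isPolynomialFun_Gmat X n j c) i j

theorem isPolynomialFun_fval : IsPolynomialFun fun x => fval X (unflatten (r := r) x) :=
  .sum fun _ _ => IsPolynomialFun.pow (.sum fun _ _ => (IsPolynomialFun.const _).mul <|
    .prod fun _ _ => isPolynomialFun_unflatten _ _ _) 2

theorem isPolynomialFun_residualSq :
    IsPolynomialFun fun x => residualSq X (unflatten (r := r) x) := by
  refine .sum fun n _ => .sum fun i _ => .sum fun t _ => IsPolynomialFun.pow ?_ 2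
  have hA := isPolynomialFun_unflatten (I := I) (r := r) n
  exact isPolynomialFun_matrix_mul (fun i j => (IsPolynomialFun.const _).sub
    (isPolynomialFun_matrix_mul hA (fun t i => hA i t) i j))
    (isPolynomialFun_matrix_mul (isPolynomialFun_blockGram X n) hA) i t

theorem continuous_blockGram (n : Fin N) :
    Continuous fun x => blockGram X (unflatten (r := r) x) n :=
  continuous_matrix fun i j => (isPolynomialFun_blockGram X n i j).continuous

theorem exists_fro_sub_le (n : Fin N) : ∃ L, 0 ≤ L ∧ ∀ A B : Factors I r, TFeas A → TFeas B →
    fro (A n - B n) ≤ L * dist (flatten A) (flatten B) := by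
  obtain ⟨L, hL, h⟩ := exists_fro_sub_le_mul_dist (isPolynomialFun_unflatten (I := I) (r := r) n)
    isCompact_feasibleSet
  exact ⟨L, hL, fun A B hA hB => h (flatten A) hA (flatten B) hB⟩

theorem exists_fro_blockGram_sub_le (n : Fin N) :
    ∃ L, 0 ≤ L ∧ ∀ A B : Factors I r, TFeas A → TFeas B →
      fro (blockGram X A n - blockGram X B n) ≤ L * dist (flatten A) (flatten B) := by
  obtain ⟨L, hL, h⟩ := exists_fro_sub_le_mul_dist (isPolynomialFun_blockGram (r := r) X n)
    isCompact_feasibleSet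
  exact ⟨L, hL, fun A B hA hB => h (flatten A) hA (flatten B) hB⟩

theorem exists_fro_blockGram_le (n : Fin N) :
    ∃ K, ∀ A : Factors I r, TFeas A → fro (blockGram X A n) ≤ K := by
  obtain ⟨K, hK⟩ := isCompact_feasibleSet.exists_bound_of_continuousOn
    (continuous_fro.comp (continuous_blockGram (r := r) X n)).continuousOn
  exact ⟨K, fun A hA => (le_abs_self _).trans (hK (flatten A) hA)⟩

end BlockGram

section Sweep

variable {N : ℕ} {I r : Fin N → ℕ} {X : ((n : Fin N) → Fin (I n)) → ℝ} {A B : Factors I r}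

theorem hyb_eq_or (A B : Factors I r) (n i : Fin N) : hyb A B n i = B i ∨ hyb A B n i = A i :=
  ite_eq_or_eq _ _ _

theorem tfeas_hyb (hA : TFeas A) (hB : TFeas B) (n : Fin N) : TFeas (hyb A B n) := fun i => by
  rcases hyb_eq_or A B n i with h | h <;> rw [h]
  exacts [hB i, hA i]

theorem dist_flatten_hyb_left_le (A B : Factors I r) (n : Fin N) :
    dist (flatten (hyb A B n)) (flatten A) ≤ dist (flatten A) (flatten B) := by
  refine (dist_pi_le_iff dist_nonneg).2 fun e => ?_
  rcases hyb_eq_or A B n e.1 with h | h <;> simp only [flatten, h]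
  · exact (dist_comm _ _).trans_le (dist_le_pi_dist (flatten A) (flatten B) e)
  · exact (dist_self _).trans_le dist_nonneg

theorem dist_flatten_hyb_right_le (A B : Factors I r) (n : Fin N) :
    dist (flatten B) (flatten (hyb A B n)) ≤ dist (flatten A) (flatten B) := by
  refine (dist_pi_le_iff dist_nonneg).2 fun e => ?_
  rcases hyb_eq_or A B n e.1 with h | h <;> simp only [flatten, h]
  · exact (dist_self _).trans_le dist_nonneg
  · exact (dist_comm _ _).trans_le (dist_le_pi_dist (flatten A) (flatten B) e)

theorem exists_fro_hyb_residual_le (X : ((n : Fin N) → Fin (I n)) → ℝ) (n : Fin N) :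
    ∃ L, 0 ≤ L ∧ ∀ A B : Factors I r, TFeas A → TFeas B →
      fro ((1 - A n * (A n)ᵀ) * (blockGram X (hyb A B n) n * A n)) ≤
        √(residualSq X A) + L * dist (flatten A) (flatten B) := by
  obtain ⟨L, hL, hlip⟩ := exists_fro_blockGram_sub_le (r := r) X n
  refine ⟨L * √(r n), by positivity, fun A B hA hB => ?_⟩
  refine (fro_one_sub_mul_transpose_mul_mul_le (hA n) _ (blockGram X A n)).trans ?_
  rw [Fintype.card_fin, mul_right_comm]
  gcongr
  · exact fro_blockResidual_le X A n
  · exact (hlip _ A (tfeas_hyb hA hB n) hA).trans (by gcongr; exact dist_flatten_hyb_left_le A B n)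

theorem exists_abs_blockGain_le (X : ((n : Fin N) → Fin (I n)) → ℝ) (n : Fin N) :
    ∃ C, 0 ≤ C ∧ ∀ A B : Factors I r, TFeas A → TFeas B →
      |blockGain X A B n| ≤ C * (√(residualSq X A) * dist (flatten A) (flatten B) +
        dist (flatten A) (flatten B) ^ 2) := by
  obtain ⟨κ, hκ, hfro⟩ := exists_fro_sub_le (I := I) (r := r) n
  obtain ⟨L, hL, hres⟩ := exists_fro_hyb_residual_le (r := r) X n
  obtain ⟨K, hgram⟩ := exists_fro_blockGram_le (r := r) X n
  refine ⟨2 * κ + 2 * κ * L + (r n + 1) * max K 0 * κ ^ 2, by positivity, fun A B hA hB => ?_⟩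
  set R := √(residualSq X A)
  set d := dist (flatten A) (flatten B)
  have : 0 ≤ d := dist_nonneg
  have : 0 ≤ R := Real.sqrt_nonneg _
  have hstep : fro (B n - A n) ≤ κ * d := (hfro B A hB hA).trans_eq (by rw [dist_comm])
  have hgram' : fro (blockGram X (hyb A B n) n) ≤ max K 0 :=
    (hgram _ (tfeas_hyb hA hB n)).trans (le_max_left _ _)
  calc |blockGain X A B n|
      ≤ 2 * (fro (B n - A n) * fro ((1 - A n * (A n)ᵀ) * (blockGram X (hyb A B n) n * A n))) +
          (r n + 1) * fro (blockGram X (hyb A B n) n) * fro (B n - A n) ^ 2 := by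
        simpa only [blockGain, Fintype.card_fin] using
          abs_rayleigh_sub_rayleigh_le (transpose_blockGram X (hyb A B n) n) (hA n) (hB n)
    _ ≤ 2 * (κ * d * (R + L * d)) + (r n + 1) * max K 0 * (κ * d) ^ 2 := by
        gcongr
        exacts [fro_nonneg _, hres A B hA hB, fro_nonneg _]
    _ = 2 * κ * (R * d) + (2 * κ * L + (r n + 1) * max K 0 * κ ^ 2) * d ^ 2 := by ring
    _ ≤ (2 * κ + 2 * κ * L + (r n + 1) * max K 0 * κ ^ 2) * (R * d) +
          (2 * κ + 2 * κ * L + (r n + 1) * max K 0 * κ ^ 2) * d ^ 2 := by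
        gcongr ?_ * _ + ?_ * _
        · rw [add_assoc]
          exact le_add_of_nonneg_right (by positivity)
        · rw [add_assoc]
          exact le_add_of_nonneg_left (by positivity)
    _ = _ := (mul_add _ _ _).symm

theorem exists_abs_fval_sub_le (X : ((n : Fin N) → Fin (I n)) → ℝ) :
    ∃ C, 0 ≤ C ∧ ∀ A B : Factors I r, TFeas A → TFeas B →
      |fval X B - fval X A| ≤ C * (√(residualSq X A) * dist (flatten A) (flatten B) +
        dist (flatten A) (flatten B) ^ 2) := by
  choose C hC h using exists_abs_blockGain_le (r := r) X
  refine ⟨∑ n, C n, Finset.sum_nonneg fun n _ => hC n, fun A B hA hB => ?_⟩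
  rw [← sum_blockGain, Finset.sum_mul]
  exact (Finset.abs_sum_le_sum_abs _ _).trans (Finset.sum_le_sum fun n _ => h n A B hA hB)

/-- One sweep of greedy HOOI over all the blocks, which turns `A` into `B`. -/
def IsGreedySweep (X : ((n : Fin N) → Fin (I n)) → ℝ) (A B : Factors I r) : Prop :=
  ∀ n, IsGreedyUpdate (blockGram X (hyb A B n) n) (A n) (B n)

theorem IsGreedySweep.tfeas (h : IsGreedySweep X A B) : TFeas B := fun n => (h n).transpose_mul_self

theorem isGreedySweep_of_isGreedyHOOI {A : ℕ → Factors I r} (h : IsGreedyHOOI X A) (k : ℕ) :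
    IsGreedySweep X (A k) (A (k + 1)) := fun n => by
  obtain ⟨⟨hfeas, hmax⟩, hgreedy⟩ := h
  simp only [Gseq, froSq_transpose_mul] at hmax hgreedy
  exact ⟨hfeas _ n, hmax k n, fun C hC hCB => hgreedy k n C hC fun D hD =>
    (hmax k n D hD).trans_eq hCB.symm⟩

theorem exists_sqrt_residualSq_le (X : ((n : Fin N) → Fin (I n)) → ℝ) :
    ∃ C, 0 ≤ C ∧ ∀ A B : Factors I r, TFeas A → IsGreedySweep X A B →
      √(residualSq X B) ≤ C * dist (flatten A) (flatten B) := by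
  choose L hL hlip using exists_fro_blockGram_sub_le (r := r) X
  refine ⟨∑ n, L n * √(r n), Finset.sum_nonneg fun n _ => mul_nonneg (hL n) (Real.sqrt_nonneg _),
    fun A B hA hAB => (sqrt_residualSq_le_sum X B).trans ?_⟩
  rw [Finset.sum_mul]
  refine Finset.sum_le_sum fun n _ => ?_
  have hstat := one_sub_mul_mul_eq_zero_of_forall_rayleigh_le
    (transpose_blockGram X (hyb A B n) n) (hAB.tfeas n) (hAB n).rayleigh_le
  have h := fro_one_sub_mul_transpose_mul_mul_le (hAB.tfeas n) (blockGram X B n)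
    (blockGram X (hyb A B n) n)
  rw [hstat, Fintype.card_fin, fro_zero, zero_add] at h
  calc fro (blockResidual X B n)
      ≤ fro (blockGram X B n - blockGram X (hyb A B n) n) * √(r n) := h
    _ ≤ L n * dist (flatten A) (flatten B) * √(r n) := by
        gcongr
        refine (hlip n _ _ hAB.tfeas (tfeas_hyb hA hAB.tfeas n)).trans ?_
        gcongr
        exacts [hL n, dist_flatten_hyb_right_le A B n]
    _ = L n * √(r n) * dist (flatten A) (flatten B) := by ring

/-- Near `Astar`, at scale `ε`, a greedy update of any block increases `f` by at least `ε` times the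
squared length of the step. -/
def HasUpdateGain (X : ((n : Fin N) → Fin (I n)) → ℝ) (Astar : Factors I r) (ε : ℝ) : Prop :=
  ∀ n, ∀ H : Factors I r, dist (flatten H) (flatten Astar) ≤ ε →
    ∀ A B : Matrix (Fin (I n)) (Fin (r n)) ℝ, Aᵀ * A = 1 → IsGreedyUpdate (blockGram X H n) A B →
      ε * froSq (B - A) ≤ rayleigh (blockGram X H n) B - rayleigh (blockGram X H n) A

theorem exists_hasUpdateGain_of_nonDeg (hr : ∀ n, r n ≤ I n) {Astar : Factors I r}
    (hnd : NonDeg X Astar) : ∃ ε > 0, HasUpdateGain X Astar ε := by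
  have hblock (n : Fin N) : ∀ᶠ ε in 𝓝[>] (0 : ℝ), ∀ H : Factors I r,
      dist (flatten H) (flatten Astar) ≤ ε → ∀ A B : Matrix (Fin (I n)) (Fin (r n)) ℝ,
      Aᵀ * A = 1 → IsGreedyUpdate (blockGram X H n) A B →
      ε * froSq (B - A) ≤ rayleigh (blockGram X H n) B - rayleigh (blockGram X H n) A := by
    obtain ⟨V, lam, mu, hmu, hlt, hV⟩ := exists_hasSpectralGap_of_sval_lt _ (hr n) (hnd n)
    obtain ⟨ρ, hρ, c, hc, hgain⟩ :=
      hV.exists_forall_mul_froSq_le (posSemidef_blockGram X Astar n) hmu hlt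
    have hcont : Continuous fun x => fro (blockGram X (unflatten (r := r) x) n -
        blockGram X Astar n) :=
      continuous_fro.comp ((continuous_blockGram X n).sub continuous_const)
    have hlim : Tendsto (fun x => fro (blockGram X (unflatten (r := r) x) n -
        blockGram X Astar n)) (𝓝 (flatten Astar)) (𝓝 0) :=
      hcont.tendsto' _ _ (by rw [unflatten_flatten, sub_self, fro_zero])
    obtain ⟨δ, hδ, hclose⟩ := Metric.eventually_nhds_iff.1 (hlim.eventually_le_const hρ)
    filter_upwards [Ioo_mem_nhdsGT (lt_min hc hδ)] with ε hε H hH A B hA hAB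
    have hS : fro (blockGram X H n - blockGram X Astar n) ≤ ρ :=
      hclose (y := flatten H) (hH.trans_lt (hε.2.trans_le (min_le_right _ _)))
    refine le_trans ?_ (hgain _ (transpose_blockGram X H n) hS A B hA hAB)
    gcongr
    exacts [froSq_nonneg _, hε.2.le.trans (min_le_left _ _)]
  obtain ⟨ε, hε, h⟩ := (eventually_mem_nhdsWithin.and (eventually_all.2 hblock)).exists
  exact ⟨ε, hε, h⟩

theorem IsGreedySweep.mul_froSq_le_blockGain (hA : TFeas A) (hAB : IsGreedySweep X A B)
    {Astar : Factors I r} {ε : ℝ} (hε : 0 < ε) (hgain : HasUpdateGain X Astar ε)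
    (hdist : dist (flatten A) (flatten Astar) ≤ ε / 2)
    (hle : fval X B - fval X A ≤ ε * (ε / 2) ^ 2) (n : Fin N) :
    ε * froSq (B n - A n) ≤ blockGain X A B n := by
  induction n using WellFoundedLT.induction with
  | ind n ih =>
  refine hgain n _ ?_ _ _ (hA n) (hAB n)
  have hnonneg (i : Fin N) : 0 ≤ blockGain X A B i :=
    sub_nonneg.2 ((hAB i).rayleigh_le _ (hA i))
  have hstep (i : Fin N) (hi : i < n) : fro (B i - A i) ≤ ε / 2 := by
    refine Real.sqrt_le_iff.2 ⟨by positivity, le_of_mul_le_mul_left ?_ hε⟩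
    calc ε * froSq (B i - A i) ≤ blockGain X A B i := ih i hi
      _ ≤ ∑ j, blockGain X A B j :=
        Finset.single_le_sum (fun j _ => hnonneg j) (Finset.mem_univ i)
      _ ≤ ε * (ε / 2) ^ 2 := by rwa [sum_blockGain]
  have hhyb : dist (flatten (hyb A B n)) (flatten A) ≤ ε / 2 := by
    refine dist_flatten_le (by positivity) fun i => ?_
    rw [hyb]
    split_ifs with hi
    · exact hstep i hi
    · rw [sub_self, fro_zero]
      positivity
  linarith [dist_triangle (flatten (hyb A B n)) (flatten A) (flatten Astar)]

theorem IsGreedySweep.mul_sq_dist_le (hA : TFeas A) (hAB : IsGreedySweep X A B)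
    {Astar : Factors I r} {ε : ℝ} (hε : 0 < ε) (hgain : HasUpdateGain X Astar ε)
    (hdist : dist (flatten A) (flatten Astar) ≤ ε / 2)
    (hle : fval X B - fval X A ≤ ε * (ε / 2) ^ 2) :
    ε * dist (flatten A) (flatten B) ^ 2 ≤ fval X B - fval X A := by
  calc ε * dist (flatten A) (flatten B) ^ 2 ≤ ε * ∑ n, froSq (B n - A n) := by
        rw [dist_comm]
        gcongr
        exact sq_dist_flatten_le B A
    _ ≤ ∑ n, blockGain X A B n := by
        rw [Finset.mul_sum]
        exact Finset.sum_le_sum fun n _ => hAB.mul_froSq_le_blockGain hA hε hgain hdist hle n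
    _ = fval X B - fval X A := sum_blockGain X A B

end Sweep

end HOOI

/-- Every greedy HOOI sequence starting sufficiently close to a
block-nondegenerate globally optimal solution converges to a globally optimal
solution. -/
theorem stmt14 {N : ℕ} {I r : Fin N → ℕ} (hr : ∀ n, r n ≤ I n)
    (X : ((n : Fin N) → Fin (I n)) → ℝ)
    (Astar : (n : Fin N) → Matrix (Fin (I n)) (Fin (r n)) ℝ)
    (hstar : GlobalMax X Astar) (hnd : NonDeg X Astar) :
    ∃ δ > (0 : ℝ), ∀ A : ℕ → (n : Fin N) → Matrix (Fin (I n)) (Fin (r n)) ℝ,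
      IsGreedyHOOI X A → tdist (A 0) Astar ≤ δ →
      ∃ Abar : (n : Fin N) → Matrix (Fin (I n)) (Fin (r n)) ℝ,
        TFeas Abar ∧ GlobalMax X Abar ∧
        ∀ n, Filter.Tendsto (fun k => fro (A k n - Abar n)) Filter.atTop (nhds 0) := by
  open HOOI in
  obtain ⟨C, hC, hfval⟩ := exists_abs_fval_sub_le (r := r) X
  obtain ⟨C₁, hC₁, hresidual⟩ := exists_sqrt_residualSq_le (r := r) X
  obtain ⟨ε, hε, hgain⟩ := exists_hasUpdateGain_of_nonDeg hr hnd
  obtain ⟨δ, hδ, hconv⟩ := Metric.eventually_nhds_iff.1 <|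
    eventually_exists_tendsto_of_sufficient_decrease isCompact_feasibleSet
      isSemialgebraic_feasibleSet ((IsPolynomialFun.const _).sub (isPolynomialFun_fval X))
      (isPolynomialFun_residualSq X) (fun x hx => sub_nonneg.2 (hstar.2 _ hx)) hC
      (fun x hx y hy => by
        simpa only [sub_sub_sub_cancel_left, flatten_unflatten] using
          hfval (unflatten x) (unflatten y) hx hy)
      hε hC₁ (half_pos hε) (by positivity : 0 < ε * (ε / 2) ^ 2) (a := flatten Astar) (sub_self _)
  refine ⟨δ / 2, half_pos hδ, fun A hA hdist => ?_⟩
  have hfeas := hA.1.1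
  have hsweep := isGreedySweep_of_isGreedyHOOI hA
  obtain ⟨x, hx, hlim, hmax⟩ := hconv
    ((dist_flatten_le_tdist _ _).trans_lt (hdist.trans_lt (half_lt_self hδ)))
    (fun k => flatten (A k)) rfl hfeas
    (fun k hk hgap => by
      have hle := hstar.2 _ (hfeas (k + 1))
      rw [unflatten_flatten] at hgap
      simpa using (hsweep k).mul_sq_dist_le (hfeas k) hε hgain hk (by linarith))
    (fun k => hresidual _ _ (hfeas k) (hsweep k))
  exact ⟨unflatten x, hx, ⟨hx, fun B hB => (hstar.2 B hB).trans (sub_eq_zero.1 hmax).le⟩,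
    tendsto_fro_sub hlim⟩
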